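/- Let G be a group carrying an invariant finitely additive probability measure μ, let r ≥ 1, and let c : G → Fin r be any coloring of G. Then μ({y ∈ G : μ({x ∈ G : c(x) = c(y) ∧ c(x·y) = c(y) ∧ c(y·x) = c(y)}) > 0}) > 0. -/

import Mathlib

/-- A two-sided invariant finitely additive probability measure on a group `G`. -/
structure IsInvFAPM {G : Type*} [Group G] (μ : Set G → ℝ) : Prop where
  nonneg : ∀ A : Set G, 0 ≤ μ A
  total : μ (Set.univ : Set G) = 1
  additive : ∀ A B : Set G, Disjoint A B → μ (A ∪ B) = μ A + μ B
  left_invariant : ∀ (g : G) (A : Set G), μ ((g * ·) '' A) = μ A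
  right_invariant : ∀ (g : G) (A : Set G), μ ((· * g) '' A) = μ A

namespace SchurMean

/-- A bounded real-valued function. -/
def Bdd {X : Type*} (f : X → ℝ) : Prop := ∃ C, ∀ x, |f x| ≤ C

namespace Bdd

variable {X Y : Type*} {f g : X → ℝ}

theorem const (c : ℝ) : Bdd (fun _ : X => c) := ⟨|c|, fun _ => le_rfl⟩

theorem comp (hf : Bdd f) (φ : Y → X) : Bdd (fun y => f (φ y)) :=
  let ⟨C, h⟩ := hf; ⟨C, fun y => h (φ y)⟩

theorem add (hf : Bdd f) (hg : Bdd g) : Bdd (fun x => f x + g x) := by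
  obtain ⟨C, h⟩ := hf
  obtain ⟨D, h'⟩ := hg
  exact ⟨C + D, fun x => (abs_add_le _ _).trans (add_le_add (h x) (h' x))⟩

theorem mul (hf : Bdd f) (hg : Bdd g) : Bdd (fun x => f x * g x) := by
  obtain ⟨C, h⟩ := hf
  obtain ⟨D, h'⟩ := hg
  refine ⟨C * D, fun x => ?_⟩
  rw [abs_mul]
  exact mul_le_mul (h x) (h' x) (abs_nonneg _) ((abs_nonneg _).trans (h x))

theorem smul (c : ℝ) (hf : Bdd f) : Bdd (fun x => c * f x) := (const c).mul hf

theorem sub (hf : Bdd f) (hg : Bdd g) : Bdd (fun x => f x - g x) := by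
  simpa [sub_eq_add_neg] using hf.add (hg.smul (-1))

theorem sq (hf : Bdd f) : Bdd (fun x => f x ^ 2) := by
  simpa [pow_two] using hf.mul hf

theorem listSum {ι : Type*} {F : ι → X → ℝ} (hF : ∀ i, Bdd (F i)) (l : List ι) :
    Bdd (fun x => (l.map fun i => F i x).sum) := by
  induction l with
  | nil => simpa using const 0
  | cons a l ih => simpa using (hF a).add ih

theorem of_finite_range (h : (Set.range f).Finite) : Bdd f := by
  obtain ⟨C, hC⟩ := (h.image fun x => |x|).bddAbove
  exact ⟨C, fun x => hC ⟨f x, ⟨x, rfl⟩, rfl⟩⟩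

end Bdd

/-- The real indicator function of a set. -/
noncomputable def ind {X : Type*} (B : Set X) : X → ℝ := B.indicator 1

section ind

variable {X Y : Type*} {A B : Set X} {x : X}

theorem ind_of_mem (h : x ∈ B) : ind B x = 1 := by simp [ind, h]

theorem ind_of_notMem (h : x ∉ B) : ind B x = 0 := by simp [ind, h]

theorem ind_nonneg (B : Set X) (x : X) : 0 ≤ ind B x := by
  by_cases h : x ∈ B <;> simp [ind, h]

theorem ind_le_one (B : Set X) (x : X) : ind B x ≤ 1 := by
  by_cases h : x ∈ B <;> simp [ind, h]

theorem abs_ind_le (B : Set X) (x : X) : |ind B x| ≤ 1 := by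
  rw [abs_of_nonneg (ind_nonneg B x)]; exact ind_le_one B x

theorem bdd_ind (B : Set X) : Bdd (ind B) := ⟨1, abs_ind_le B⟩

theorem ind_comp (B : Set X) (φ : Y → X) : (fun y => ind B (φ y)) = ind (φ ⁻¹' B) := by
  funext y
  by_cases h : φ y ∈ B
  · rw [ind_of_mem h, ind_of_mem (B := φ ⁻¹' B) h]
  · rw [ind_of_notMem h, ind_of_notMem (B := φ ⁻¹' B) h]

theorem ind_inter (A B : Set X) (x : X) : ind (A ∩ B) x = ind A x * ind B x := by
  by_cases h : x ∈ A <;> by_cases h' : x ∈ B <;> simp [ind, h, h']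

theorem ind_union (h : Disjoint A B) (x : X) : ind (A ∪ B) x = ind A x + ind B x := by
  by_cases h1 : x ∈ A
  · have h2 : x ∉ B := fun h2 => Set.disjoint_left.1 h h1 h2
    simp [ind, h1, h2]
  · by_cases h2 : x ∈ B <;> simp [ind, h1, h2]

theorem finite_range_ind (B : Set X) : (Set.range (ind B)).Finite := by
  refine (Set.toFinite ({0, 1} : Set ℝ)).subset ?_
  rintro _ ⟨x, rfl⟩
  by_cases h : x ∈ B <;> simp [ind, h]

end ind

/-- A mean: a linear functional which is positive on bounded functions and normalized. -/
structure Mean (X : Type*) where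
  /-- The underlying linear functional. -/
  toLin : (X → ℝ) →ₗ[ℝ] ℝ
  nonneg' : ∀ f, Bdd f → (∀ x, 0 ≤ f x) → 0 ≤ toLin f
  one' : toLin (fun _ => 1) = 1

namespace Mean

variable {X Y : Type*}

instance : CoeFun (Mean X) (fun _ => (X → ℝ) → ℝ) := ⟨fun m => m.toLin⟩

variable (m : Mean X) {f g : X → ℝ}

theorem add (f g : X → ℝ) : m (fun x => f x + g x) = m f + m g := m.toLin.map_add f g

theorem sub (f g : X → ℝ) : m (fun x => f x - g x) = m f - m g := m.toLin.map_sub f g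

theorem smul (c : ℝ) (f : X → ℝ) : m (fun x => c * f x) = c * m f := m.toLin.map_smul c f

theorem smul_right (c : ℝ) (f : X → ℝ) : m (fun x => f x * c) = m f * c := by
  simp_rw [mul_comm _ c]; exact m.smul c f

theorem const (c : ℝ) : m (fun _ => c) = c := by
  have := m.smul c (fun _ => 1)
  rw [m.one'] at this
  simpa using this

theorem listSum {ι : Type*} (F : ι → X → ℝ) (l : List ι) :
    m (fun x => (l.map fun i => F i x).sum) = (l.map fun i => m (F i)).sum := by
  induction l with
  | nil => simpa using m.const 0
  | cons a l ih => simp only [List.map_cons, List.sum_cons, m.add, ih]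

theorem sum {ι : Type*} (F : ι → X → ℝ) (s : Finset ι) :
    m (fun x => ∑ i ∈ s, F i x) = ∑ i ∈ s, m (F i) := by
  rw [← map_sum]
  congr 1
  funext x
  simp

theorem nonneg (hf : Bdd f) (h : ∀ x, 0 ≤ f x) : 0 ≤ m f := m.nonneg' f hf h

theorem mono (hf : Bdd f) (hg : Bdd g) (h : ∀ x, f x ≤ g x) : m f ≤ m g := by
  have := m.nonneg (hg.sub hf) (fun x => sub_nonneg.2 (h x))
  rw [m.sub] at this
  linarith

theorem le_of_le (hf : Bdd f) {C : ℝ} (h : ∀ x, f x ≤ C) : m f ≤ C :=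
  (m.mono hf (Bdd.const C) h).trans_eq (m.const C)

theorem ge_of_ge (hf : Bdd f) {C : ℝ} (h : ∀ x, C ≤ f x) : C ≤ m f :=
  (m.const C).symm.trans_le (m.mono (Bdd.const C) hf h)

theorem abs_le {C : ℝ} (h : ∀ x, |f x| ≤ C) : |m f| ≤ C :=
  _root_.abs_le.2 ⟨m.ge_of_ge ⟨C, h⟩ fun x => (_root_.abs_le.1 (h x)).1,
    m.le_of_le ⟨C, h⟩ fun x => (_root_.abs_le.1 (h x)).2⟩

theorem exists_le (hf : Bdd f) {c : ℝ} (h : m f < c) : ∃ x, f x ≤ c := by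
  by_contra! hc
  exact absurd (m.ge_of_ge hf fun x => (hc x).le) (not_le.2 h)

/-- Cauchy–Schwarz against a function bounded by one. -/
theorem sq_mul_le {V : X → ℝ} (hf : ∀ x, |f x| ≤ 1) (hV : Bdd V) :
    (m fun x => f x * V x) ^ 2 ≤ m fun x => V x ^ 2 := by
  set t := m fun x => f x * V x with ht
  have hfb : Bdd f := ⟨1, hf⟩
  have h1 : 0 ≤ m fun x => V x ^ 2 - 2 * t * (f x * V x) + t ^ 2 := by
    refine m.nonneg ((hV.sq.sub ((hfb.mul hV).smul _)).add (Bdd.const _)) fun x => ?_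
    have h2 : f x ^ 2 ≤ 1 := by rw [sq_le_one_iff_abs_le_one]; exact hf x
    nlinarith [sq_nonneg (V x - t * f x), sq_nonneg t]
  rw [m.add, m.sub, m.smul, m.const, ← ht] at h1
  nlinarith

theorem ext_ind_le {m n : Mean X} (h : ∀ B, m (ind B) = n (ind B)) (hf : Bdd f) {ε : ℝ}
    (hε : 0 < ε) : m f ≤ n f + ε := by
  obtain ⟨C, hC⟩ := hf
  have hC' : ∀ x, |f x / ε| ≤ C / ε := fun x => by
    rw [abs_div, abs_of_pos hε]; exact div_le_div_of_nonneg_right (hC x) hε.le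
  set g : X → ℝ := fun x => ε * ⌊f x / ε⌋ with hg
  have hgf : ∀ x, g x ≤ f x := fun x => by
    have := Int.floor_le (f x / ε)
    rw [le_div_iff₀ hε] at this
    simp only [hg]; linarith
  have hfg : ∀ x, f x ≤ g x + ε := fun x => by
    have := (Int.lt_floor_add_one (f x / ε)).le
    rw [div_le_iff₀ hε] at this
    simp only [hg]; linarith
  have hgb : Bdd g := ⟨C + ε, fun x => by
    have h1 := hgf x
    have h2 := hfg x
    have h3 := _root_.abs_le.1 (hC x)
    exact _root_.abs_le.2 ⟨by linarith, by linarith⟩⟩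
  set N : ℤ := ⌈C / ε⌉ + 1
  have hdec : g = fun x => ∑ k ∈ Finset.Icc (-N) N, ε * (k : ℝ) * ind {x | ⌊f x / ε⌋ = k} x := by
    funext x
    have hmem : ⌊f x / ε⌋ ∈ Finset.Icc (-N) N := by
      have h3 := _root_.abs_le.1 (hC' x)
      have h4 := Int.le_ceil (C / ε)
      rw [Finset.mem_Icc]
      constructor
      · rw [Int.le_floor]; push_cast [N]; linarith
      · have := Int.floor_le (f x / ε)
        have h5 : (⌊f x / ε⌋ : ℝ) ≤ (⌈C / ε⌉ : ℝ) := by linarith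
        have h6 : ⌊f x / ε⌋ ≤ ⌈C / ε⌉ := by exact_mod_cast h5
        omega
    rw [Finset.sum_eq_single ⌊f x / ε⌋]
    · rw [ind_of_mem (by simp)]; simp [hg]
    · intro b _ hb
      rw [ind_of_notMem (by simpa using hb.symm), mul_zero]
    · exact fun h => absurd hmem h
  have hmn : m g = n g := by
    rw [hdec, m.sum, n.sum]
    refine Finset.sum_congr rfl fun k _ => ?_
    rw [m.smul, n.smul, h]
  calc m f ≤ m (fun x => g x + ε) := m.mono ⟨C, hC⟩ (hgb.add (Bdd.const _)) hfg
    _ = n g + ε := by rw [m.add, m.const, hmn]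
    _ ≤ n f + ε := by gcongr; exact n.mono hgb ⟨C, hC⟩ hgf

theorem ext_ind {m n : Mean X} (h : ∀ B, m (ind B) = n (ind B)) (hf : Bdd f) : m f = n f :=
  le_antisymm (le_of_forall_pos_le_add fun _ hε => ext_ind_le h hf hε)
    (le_of_forall_pos_le_add fun _ hε => ext_ind_le (fun B => (h B).symm) hf hε)

/-- The push-forward of a mean. -/
def map (m : Mean X) (φ : X → Y) : Mean Y where
  toLin := m.toLin.comp (LinearMap.funLeft ℝ ℝ φ)
  nonneg' _ hf h := m.nonneg (hf.comp φ) (fun x => h (φ x))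
  one' := m.const 1

theorem map_apply (m : Mean X) (φ : X → Y) (f : Y → ℝ) : m.map φ f = m (fun x => f (φ x)) := rfl

/-- The product of two means, integrating the second variable first. -/
def prod (κ : Mean Y) (m : Mean X) : Mean (Y × X) where
  toLin :=
    { toFun := fun F => κ fun k => m fun x => F (k, x)
      map_add' := fun F F' => by
        rw [← κ.add]; congr 1; funext k; exact m.add _ _
      map_smul' := fun c F => by
        rw [RingHom.id_apply, smul_eq_mul, ← κ.smul]; congr 1; funext k; exact m.smul _ _ }
  nonneg' F hF h := by
    obtain ⟨C, hC⟩ := hF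
    exact κ.nonneg ⟨C, fun k => m.abs_le fun x => hC _⟩
      fun k => m.nonneg ⟨C, fun x => hC _⟩ fun x => h _
  one' := by
    change (κ fun k => m fun x => 1) = 1
    rw [m.const, κ.const]

theorem prod_apply (κ : Mean Y) (m : Mean X) (F : Y × X → ℝ) :
    κ.prod m F = κ fun k => m fun x => F (k, x) := rfl

theorem bdd_apply {F : Y → X → ℝ} {C : ℝ} (h : ∀ y x, |F y x| ≤ C) : Bdd fun y => m (F y) :=
  ⟨C, fun y => m.abs_le (h y)⟩

end Mean

/-- Finitely additive nonnegative set functions. -/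
structure IsFA {X : Type*} (ν : Set X → ℝ) : Prop where
  nonneg : ∀ B, 0 ≤ ν B
  add : ∀ A B, Disjoint A B → ν (A ∪ B) = ν A + ν B

theorem IsFA.mono {X : Type*} {ν : Set X → ℝ} (h : IsFA ν) {A B : Set X} (hAB : A ⊆ B) :
    ν A ≤ ν B := by
  have := h.add A (B \ A) Set.disjoint_sdiff_right
  rw [Set.union_sdiff_cancel hAB] at this
  linarith [h.nonneg (B \ A)]

theorem IsFA.empty {X : Type*} {ν : Set X → ℝ} (h : IsFA ν) : ν ∅ = 0 := by
  have := h.add ∅ ∅ (by simp)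
  rw [Set.union_self] at this
  linarith

theorem Mean.isFA {X : Type*} (m : Mean X) : IsFA fun B => m (ind B) where
  nonneg B := m.nonneg (bdd_ind B) (ind_nonneg B)
  add A B h := by
    rw [← m.add]; congr 1; funext x; exact ind_union h x

theorem Mean.univ {X : Type*} (m : Mean X) : m (ind Set.univ) = 1 := by
  rw [← m.one']; congr 1; funext x; exact ind_of_mem trivial

open MeasureTheory in
/-- Every finitely additive probability extends to a mean. -/
theorem exists_mean {X : Type*} {ν : Set X → ℝ} (hν : IsFA ν) (h1 : ν Set.univ = 1) :
    ∃ m : Mean X, ∀ B, m (ind B) = ν B := by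
  classical
  have hne : Nonempty X := by
    by_contra h
    rw [not_nonempty_iff] at h
    rw [Set.univ_eq_empty_iff.2 h, hν.empty] at h1
    exact zero_ne_one h1
  let _ : MeasurableSpace X := ⊤
  let T : Set X → ℝ →L[ℝ] ℝ := fun B => ν B • ContinuousLinearMap.id ℝ ℝ
  have hT : FinMeasAdditive (0 : Measure X) T := fun s t _ _ _ _ hd => by
    simp only [T]; rw [hν.add s t hd, add_smul]
  have hint : ∀ f : SimpleFunc X ℝ, Integrable f (0 : Measure X) := fun f => integrable_zero_measure
  let Φ : SimpleFunc X ℝ →ₗ[ℝ] ℝ :=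
    { toFun := fun f => SimpleFunc.setToSimpleFunc T f
      map_add' := fun f g => SimpleFunc.setToSimpleFunc_add T hT (hint f) (hint g)
      map_smul' := fun c f => SimpleFunc.setToSimpleFunc_smul_real T hT c (hint f) }
  let E : Submodule ℝ (X → ℝ) :=
    { carrier := {f | Bdd f}
      add_mem' := fun hf hg => hf.add hg
      zero_mem' := Bdd.const 0
      smul_mem' := fun c f hf => hf.smul c }
  have hSb : ∀ f : SimpleFunc X ℝ, Bdd f := fun f => Bdd.of_finite_range f.finite_range
  let J : SimpleFunc X ℝ →ₗ[ℝ] E :=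
    { toFun := fun f => ⟨f, hSb f⟩
      map_add' := fun f g => rfl
      map_smul' := fun c f => rfl }
  have hJ : Function.Injective J := fun f g h => by
    have := congrArg Subtype.val h
    exact DFunLike.coe_injective this
  let Je := LinearEquiv.ofInjective J hJ
  let F : E →ₗ.[ℝ] ℝ := ⟨LinearMap.range J, Φ.comp Je.symm.toLinearMap⟩
  have hF : ∀ f : SimpleFunc X ℝ, F ⟨J f, ⟨f, rfl⟩⟩ = Φ f := fun f => by
    change Φ (Je.symm _) = _
    congr 1
    exact Je.symm_apply_apply f
  let s : PointedCone ℝ E :=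
    { carrier := {f | ∀ x, 0 ≤ f.1 x}
      add_mem' := fun hf hg x => add_nonneg (hf x) (hg x)
      zero_mem' := fun x => le_rfl
      smul_mem' := fun c f hf x => mul_nonneg c.2 (hf x) }
  obtain ⟨g, hg1, hg2⟩ := riesz_extension s F
    (by
      rintro ⟨_, ⟨f, rfl⟩⟩ hf
      rw [hF f]
      exact SimpleFunc.setToSimpleFunc_nonneg T
        (fun B x hx => mul_nonneg (hν.nonneg B) hx) f (fun x => hf x))
    (by
      rintro ⟨y, C, hC⟩
      refine ⟨⟨J (SimpleFunc.const X C), ⟨_, rfl⟩⟩, fun x => ?_⟩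
      have := (abs_le.1 (hC x)).1
      change 0 ≤ C + y x
      linarith)
  obtain ⟨G, hG⟩ := LinearMap.exists_extend g
  have hGJ : ∀ f : SimpleFunc X ℝ, G (f : X → ℝ) = Φ f := fun f => by
    rw [← hF f, ← hg1, ← hG]; rfl
  have hGi : ∀ B, G (ind B) = ν B := fun B => by
    have hB : MeasurableSet B := trivial
    set b := SimpleFunc.piecewise B hB (SimpleFunc.const X (1 : ℝ)) (SimpleFunc.const X 0)
    have h3 : ⇑b = ind B := by
      funext x
      by_cases h : x ∈ B
      · rw [ind_of_mem h]; exact if_pos h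
      · rw [ind_of_notMem h]; exact if_neg h
    rw [← h3, hGJ]
    have h4 := SimpleFunc.setToSimpleFunc_indicator T (by simp [T, hν.empty]) hB (1 : ℝ)
    exact h4.trans (mul_one _)
  refine ⟨⟨G, fun f hf h => ?_, ?_⟩, hGi⟩
  · have h2 := hg2 ⟨f, hf⟩ h
    rwa [← hG] at h2
  · exact (congrArg G (funext fun x => (ind_of_mem (Set.mem_univ x)).symm)).trans
      ((hGi _).trans h1)

end SchurMean

namespace SchurMean

section Ergodic

variable {X K : Type*} (Γ : Type*) [Group Γ] [MulAction Γ X] [MulAction Γ K]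

/-- Invariance of a mean under a group action. -/
def Mean.Inv (m : Mean X) : Prop :=
  ∀ (g : Γ) (f : X → ℝ), Bdd f → m (fun x => f (g • x)) = m f

/-- Invariance of a set function under a group action. -/
def IsInv (ν : Set X → ℝ) : Prop := ∀ (g : Γ) (B : Set X), ν ((g • ·) ⁻¹' B) = ν B

/-- Ergodicity: every dominated invariant finitely additive set function is proportional. -/
def IsErg (m : Mean X) : Prop :=
  ∀ ℓ : Set X → ℝ, IsFA ℓ → IsInv Γ ℓ → (∀ B, ℓ B ≤ m (ind B)) →
    ∀ B, ℓ B = ℓ Set.univ * m (ind B)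

variable {Γ}

theorem Mean.Inv.isInv {m : Mean X} (h : m.Inv Γ) : IsInv Γ fun B => m (ind B) := fun g B => by
  change m (ind _) = m (ind B)
  rw [← h g _ (bdd_ind B), ind_comp]

theorem Mean.inv_of_isInv {m : Mean X} (h : IsInv Γ fun B => m (ind B)) : m.Inv Γ := by
  intro g f hf
  change m.map (g • ·) f = m f
  refine Mean.ext_ind (fun B => ?_) hf
  rw [Mean.map_apply, ind_comp]
  exact h g B

theorem Mean.Inv.prod {κ : Mean K} {m : Mean X} (hκ : κ.Inv Γ) (hm : m.Inv Γ) :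
    (κ.prod m).Inv Γ := by
  rintro g F ⟨C, hC⟩
  rw [Mean.prod_apply, Mean.prod_apply,
    ← hκ g (fun k => m fun x => F (k, x)) (m.bdd_apply fun y x => hC _)]
  congr 1
  funext k
  exact hm g (fun x => F (g • k, x)) ⟨C, fun x => hC _⟩

theorem Mean.apply_of_finite_range (m : Mean X) {F : X → ℝ} (hF : (Set.range F).Finite) :
    m F = ∑ v ∈ hF.toFinset, v * m (ind (F ⁻¹' {v})) := by
  have h : F = fun x => ∑ v ∈ hF.toFinset, v * ind (F ⁻¹' {v}) x := by
    funext x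
    rw [Finset.sum_eq_single (F x)]
    · rw [ind_of_mem (by simp), mul_one]
    · intro b _ hb
      rw [ind_of_notMem (by simpa using hb.symm), mul_zero]
    · intro h
      exact absurd (by simp) h
  conv_lhs => rw [h]
  rw [m.sum]
  exact Finset.sum_congr rfl fun v _ => m.smul _ _

theorem isClosed_isFA : IsClosed {ν : Set X → ℝ | IsFA ν} := by
  have : {ν : Set X → ℝ | IsFA ν} =
      {ν | (∀ B, 0 ≤ ν B) ∧ ∀ A B, Disjoint A B → ν (A ∪ B) = ν A + ν B} := by
    ext ν
    exact ⟨fun h => ⟨h.1, h.2⟩, fun h => ⟨h.1, h.2⟩⟩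
  rw [this]
  simp only [Set.ofPred_and, Set.ofPred_forall]
  refine IsClosed.inter (isClosed_iInter fun B => isClosed_le (by fun_prop) (by fun_prop)) ?_
  exact isClosed_iInter fun A => isClosed_iInter fun B => isClosed_iInter fun _ =>
    isClosed_eq (by fun_prop) (by fun_prop)

variable (Γ) in
theorem isClosed_isInv : IsClosed {ν : Set X → ℝ | IsInv Γ ν} := by
  simp only [IsInv, Set.ofPred_forall]
  exact isClosed_iInter fun A => isClosed_iInter fun B => isClosed_eq (by fun_prop) (by fun_prop)

/-- In a closed hereditary family of invariant means, the value at a finite-range function is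
dominated by its value at an ergodic member. -/
theorem exists_ergodic {C : Set (Set X → ℝ)} (hC : IsClosed C)
    (hfa : ∀ n ∈ C, IsFA n ∧ IsInv Γ n ∧ n Set.univ = 1)
    (hher : ∀ n ∈ C, ∀ ℓ, IsFA ℓ → IsInv Γ ℓ → (∀ B, ℓ B ≤ n B) → 0 < ℓ Set.univ →
      (fun B => (ℓ Set.univ)⁻¹ * ℓ B) ∈ C)
    {m₀ : Mean X} (hm₀ : (fun B => m₀ (ind B)) ∈ C) {F : X → ℝ} (hF : (Set.range F).Finite) :
    ∃ m : Mean X, (fun B => m (ind B)) ∈ C ∧ m.Inv Γ ∧ IsErg Γ m ∧ m₀ F ≤ m F := by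
  have hcpt : IsCompact C := by
    refine IsCompact.of_isClosed_subset
      (isCompact_univ_pi fun _ : Set X => isCompact_Icc (a := (0 : ℝ)) (b := 1)) hC ?_
    intro n hn B _
    obtain ⟨h1, -, h3⟩ := hfa n hn
    exact ⟨h1.nonneg B, h3 ▸ h1.mono (Set.subset_univ B)⟩
  let l : (Set X → ℝ) →L[ℝ] ℝ :=
    ∑ v ∈ hF.toFinset, v • ContinuousLinearMap.proj (R := ℝ) (φ := fun _ => ℝ) (F ⁻¹' {v})
  have hl : ∀ m : Mean X, l (fun B => m (ind B)) = m F := fun m => by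
    rw [m.apply_of_finite_range hF]
    simp [l]
  have hexp := ContinuousLinearMap.toExposed.isExposed (l := l) (A := C)
  have hne : (l.toExposed C).Nonempty := by
    obtain ⟨x, hx, hmax⟩ := hcpt.exists_isMaxOn ⟨_, hm₀⟩ l.continuous.continuousOn
    exact ⟨x, hx, fun y hy => hmax hy⟩
  obtain ⟨n, hn⟩ := (hexp.isCompact hcpt).extremePoints_nonempty hne
  have hnl := hn.1
  have hext := hexp.isExtreme.extremePoints_subset_extremePoints hn
  obtain ⟨hn1, hn2, hn3⟩ := hfa n hnl.1
  obtain ⟨m, hm⟩ := exists_mean hn1 hn3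
  have hmn : (fun B => m (ind B)) = n := funext hm
  refine ⟨m, hmn ▸ hnl.1, Mean.inv_of_isInv (hmn ▸ hn2), ?_, ?_⟩
  · intro ℓ h1 h2 h3 B
    simp_rw [hm] at h3 ⊢
    rcases (h1.nonneg Set.univ).eq_or_lt with h0 | h0
    · rw [← h0, zero_mul]
      exact le_antisymm (h0 ▸ h1.mono (Set.subset_univ B)) (h1.nonneg B)
    have hfa' : IsFA fun B => n B - ℓ B := ⟨fun B => sub_nonneg.2 (h3 B), fun A B h => by
      rw [hn1.add A B h, h1.add A B h]; ring⟩
    rcases (hn3 ▸ h3 Set.univ : ℓ Set.univ ≤ 1).eq_or_lt with h5 | h5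
    · have h6 := hfa'.mono (Set.subset_univ B)
      simp only [hn3, h5] at h6
      rw [h5, one_mul]
      linarith [h3 B]
    have hu : n Set.univ - ℓ Set.univ = 1 - ℓ Set.univ := by rw [hn3]
    have hm2 := hher n hnl.1 _ hfa' (fun g B => by simp only [hn2 g B, h2 g B])
      (fun B => by linarith [h1.nonneg B]) (by simp only [hu]; linarith)
    simp only [hu] at hm2
    have hm1 := hher n hnl.1 ℓ h1 h2 h3 h0
    have hseg : n ∈ openSegment ℝ (fun B => (ℓ Set.univ)⁻¹ * ℓ B)
        (fun B => (1 - ℓ Set.univ)⁻¹ * (n B - ℓ B)) := by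
      refine ⟨ℓ Set.univ, 1 - ℓ Set.univ, h0, by linarith, by ring, ?_⟩
      have h7 : 1 - ℓ Set.univ ≠ 0 := by linarith
      funext B
      simp only [Pi.add_apply, Pi.smul_apply, smul_eq_mul]
      field_simp
      ring
    have := congrFun (hext.2 hm1 hm2 hseg) B
    field_simp at this
    rw [this]
  · rw [← hl, ← hl, hmn]
    exact hnl.2 _ hm₀

theorem exists_ergodic_absolutelyContinuous {m₀ : Mean X} (h₀ : m₀.Inv Γ) (A : Set X) :
    ∃ m : Mean X, m.Inv Γ ∧ IsErg Γ m ∧ m₀ (ind A) ≤ m (ind A) ∧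
      ∀ B, m₀ (ind B) = 0 → m (ind B) = 0 := by
  obtain ⟨m, hmC, h1, h2, h3⟩ : ∃ m : Mean X, (fun B => m (ind B)) ∈ {n | IsFA n} ∩
      {n | IsInv Γ n} ∩ {n | n Set.univ = 1} ∩ {n | ∀ B, m₀ (ind B) = 0 → n B = 0} ∧
      m.Inv Γ ∧ IsErg Γ m ∧ m₀ (ind A) ≤ m (ind A) := by
    refine exists_ergodic ?_ (fun n hn => ⟨hn.1.1.1, hn.1.1.2, hn.1.2⟩) ?_ ?_ (finite_range_ind A)
    · refine ((isClosed_isFA.inter (isClosed_isInv Γ)).inter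
        (isClosed_eq (by fun_prop) (by fun_prop))).inter ?_
      simp only [Set.ofPred_forall]
      exact isClosed_iInter fun B => isClosed_iInter fun _ =>
        isClosed_eq (by fun_prop) (by fun_prop)
    · rintro n ⟨⟨⟨hn1, hn2⟩, hn3⟩, hn4⟩ ℓ h1 h2 h3 h4
      refine ⟨⟨⟨⟨fun B => mul_nonneg (inv_nonneg.2 h4.le) (h1.nonneg B), fun A B h => ?_⟩,
        fun g B => ?_⟩, inv_mul_cancel₀ h4.ne'⟩, fun B hB => ?_⟩
      · rw [h1.add A B h, mul_add]
      · simp only [h2 g B]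
      · have h5 := h3 B
        rw [hn4 B hB] at h5
        simp only [le_antisymm h5 (h1.nonneg B), mul_zero]
    · exact ⟨⟨⟨m₀.isFA, h₀.isInv⟩, m₀.univ⟩, fun _ h => h⟩
  exact ⟨m, h1, h2, h3, hmC.2⟩

theorem exists_ergodic_extension {κ : Mean K} {m : Mean X} (hκ : κ.Inv Γ) (hm : m.Inv Γ)
    (he : IsErg Γ m) {F : K × X → ℝ} (hF : (Set.range F).Finite) :
    ∃ n : Mean (K × X), n.Inv Γ ∧ IsErg Γ n ∧ (∀ f : X → ℝ, Bdd f → n (fun x => f x.2) = m f) ∧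
      κ.prod m F ≤ n F := by
  obtain ⟨n, hnC, h1, h2, h3⟩ : ∃ n : Mean (K × X), (fun B => n (ind B)) ∈ {n | IsFA n} ∩
      {n | IsInv Γ n} ∩ {n | n Set.univ = 1} ∩ {n | ∀ B, n (Prod.snd ⁻¹' B) = m (ind B)} ∧
      n.Inv Γ ∧ IsErg Γ n ∧ κ.prod m F ≤ n F := by
    refine exists_ergodic ?_ (fun n hn => ⟨hn.1.1.1, hn.1.1.2, hn.1.2⟩) ?_ ?_ hF
    · refine ((isClosed_isFA.inter (isClosed_isInv Γ)).inter
        (isClosed_eq (by fun_prop) (by fun_prop))).inter ?_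
      simp only [Set.ofPred_forall]
      exact isClosed_iInter fun B => isClosed_eq (by fun_prop) (by fun_prop)
    · rintro n ⟨⟨⟨hn1, hn2⟩, hn3⟩, hn4⟩ ℓ h1 h2 h3 h4
      refine ⟨⟨⟨⟨fun B => mul_nonneg (inv_nonneg.2 h4.le) (h1.nonneg B), fun A B h => ?_⟩,
        fun g B => ?_⟩, inv_mul_cancel₀ h4.ne'⟩, fun B => ?_⟩
      · rw [h1.add A B h, mul_add]
      · simp only [h2 g B]
      · have h5 := he (fun B => ℓ (Prod.snd ⁻¹' B)) ⟨fun B => h1.nonneg _, fun A B h => by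
          rw [Set.preimage_union, h1.add _ _ (h.preimage _)]⟩ (fun g B => h2 g (Prod.snd ⁻¹' B))
          (fun B => (h3 _).trans_eq (hn4 B)) B
        simp only [Set.preimage_univ] at h5
        simp only [h5]
        field_simp
    · refine ⟨⟨⟨(κ.prod m).isFA, (hκ.prod hm).isInv⟩, (κ.prod m).univ⟩, fun B => ?_⟩
      change κ.prod m (ind _) = _
      rw [← ind_comp, Mean.prod_apply]
      exact κ.const (m (ind B))
  refine ⟨n, h1, h2, fun f hf => ?_, h3⟩
  change n.map Prod.snd f = m f
  refine Mean.ext_ind (fun B => ?_) hf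
  rw [Mean.map_apply, ind_comp]
  exact hnC.2 B

end Ergodic

end SchurMean

namespace SchurMean

variable {G X : Type*} [Group G]

/-- A two-sided invariant mean on a group. -/
structure BiInv (M : Mean G) : Prop where
  left : ∀ (g : G) (f : G → ℝ), Bdd f → M (fun y => f (g * y)) = M f
  right : ∀ (g : G) (f : G → ℝ), Bdd f → M (fun y => f (y * g)) = M f

theorem BiInv.inv {M : Mean G} (hM : BiInv M) : BiInv (M.map (·⁻¹)) where
  left g f hf := by
    simp only [Mean.map_apply]
    rw [← hM.right g⁻¹ (fun y => f y⁻¹) (hf.comp _)]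
    simp
  right g f hf := by
    simp only [Mean.map_apply]
    rw [← hM.left g⁻¹ (fun y => f y⁻¹) (hf.comp _)]
    simp

theorem abs_mul_le_one {a b : ℝ} (ha : |a| ≤ 1) (hb : |b| ≤ 1) : |a * b| ≤ 1 := by
  rw [abs_mul]; exact mul_le_one₀ ha (abs_nonneg _) hb

/-- The key inductive step of van der Corput's inequality. -/
theorem exists_list_vanDerCorput {M : Mean G} (hM : BiInv M) (m : Mean X) {v : G → X → ℝ}
    (hv : ∀ y x, |v y x| ≤ 1) {c : ℝ}
    (hc : (M fun h => M fun y => m fun x => v (h * y) x * v y x) < c) (n : ℕ) :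
    ∃ l : List G, l.length = n ∧
      (M fun y => m fun x => (l.map fun h => v (h * y) x).sum ^ 2) ≤ n + n * (n - 1) * c := by
  have hvv : ∀ y y' x, |v y x * v y' x| ≤ 1 := fun y y' x => abs_mul_le_one (hv y x) (hv y' x)
  have hvb : ∀ y, Bdd (v y) := fun y => ⟨1, hv y⟩
  set Φ : G → ℝ := fun h => M fun y => m fun x => v (h * y) x * v y x with hΦ
  have hΦb : ∀ h, |Φ h| ≤ 1 := fun h => M.abs_le fun y => m.abs_le fun x => hvv _ _ x
  have hcorr : ∀ h k, (M fun y => m fun x => v (h * y) x * v (k * y) x) = Φ (h * k⁻¹) := by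
    intro h k
    rw [hΦ]
    dsimp only
    rw [← hM.left k (fun y => m fun x => v (h * k⁻¹ * y) x * v y x)
      (m.bdd_apply fun y x => hvv _ _ x)]
    simp [mul_assoc]
  induction n with
  | zero => exact ⟨[], rfl, by simp [Mean.const]⟩
  | succ n ih =>
    obtain ⟨l, hl, hQ⟩ := ih
    have havg : (M fun h => (l.map fun k => Φ (h * k⁻¹)).sum) = l.length * M Φ := by
      rw [M.listSum (fun k h => Φ (h * k⁻¹))]
      simp only [hM.right _ Φ ⟨1, hΦb⟩]
      simp
    have hsb : Bdd fun h => (l.map fun k => Φ (h * k⁻¹)).sum :=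
      Bdd.listSum (F := fun k h => Φ (h * k⁻¹)) (fun k => Bdd.comp ⟨1, hΦb⟩ _) l
    obtain ⟨h, hh⟩ : ∃ h, (l.map fun k => Φ (h * k⁻¹)).sum ≤ n * c := by
      rcases Nat.eq_zero_or_pos n with h0 | h0
      · rw [h0] at hl ⊢
        rw [List.length_eq_zero_iff.1 hl]
        exact ⟨1, by simp⟩
      · refine M.exists_le hsb ?_
        rw [havg, hl]
        gcongr
    refine ⟨h :: l, by simp [hl], ?_⟩
    have hexp : ∀ y x, ((h :: l).map fun h => v (h * y) x).sum ^ 2 =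
        v (h * y) x ^ 2 + (2 * (l.map fun k => v (h * y) x * v (k * y) x).sum +
          (l.map fun h => v (h * y) x).sum ^ 2) := fun y x => by
      rw [List.map_cons, List.sum_cons, List.sum_map_mul_left]
      ring
    have hb1 : Bdd fun y => m fun x => v (h * y) x ^ 2 := m.bdd_apply (C := 1) fun y x => by
      rw [pow_two]; exact hvv _ _ x
    simp_rw [hexp, m.add, m.smul, M.add, M.smul]
    have h1 : (M fun y => m fun x => v (h * y) x ^ 2) ≤ 1 :=
      M.le_of_le hb1 fun y => m.le_of_le (hvb _).sq fun x =>
        (sq_le_one_iff_abs_le_one _).2 (hv _ x)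
    have h2 : (M fun y => m fun x => (l.map fun k => v (h * y) x * v (k * y) x).sum) =
        (l.map fun k => Φ (h * k⁻¹)).sum := by
      simp_rw [m.listSum (fun k x => v (h * _) x * v (k * _) x)]
      rw [M.listSum (fun k y => m fun x => v (h * y) x * v (k * y) x)]
      simp_rw [hcorr]
    rw [h2]
    push_cast
    nlinarith

theorem sq_le_of_forall_nat {L c : ℝ} (h : ∀ n : ℕ, (n * L) ^ 2 ≤ n + n * (n - 1) * c) :
    L ^ 2 ≤ c := by
  by_contra! hlt
  obtain ⟨n, hn⟩ := exists_nat_gt ((1 - c) / (L ^ 2 - c))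
  have hd : 0 < L ^ 2 - c := sub_pos.2 hlt
  rw [div_lt_iff₀ hd] at hn
  have h1 := h (n + 1)
  push_cast at h1
  have hp : (0 : ℝ) < n + 1 := by positivity
  have h2 : (n + 1 : ℝ) * L ^ 2 ≤ 1 + n * c := by
    have : (n + 1 : ℝ) * ((n + 1) * L ^ 2) ≤ (n + 1) * (1 + n * c) := by nlinarith
    exact le_of_mul_le_mul_left this hp
  nlinarith

/-- Van der Corput's inequality for a bounded family of functions indexed by the group. -/
theorem vanDerCorput {M : Mean G} (hM : BiInv M) (m : Mean X) {v : G → X → ℝ}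
    (hv : ∀ y x, |v y x| ≤ 1) {f : X → ℝ} (hf : ∀ x, |f x| ≤ 1) :
    (M fun y => m fun x => f x * v y x) ^ 2 ≤
      M fun h => M fun y => m fun x => v (h * y) x * v y x := by
  refine le_of_forall_gt_imp_ge_of_dense fun c hc => sq_le_of_forall_nat fun n => ?_
  obtain ⟨l, hl, hQ⟩ := exists_list_vanDerCorput hM m hv hc n
  refine le_trans ?_ hQ
  have hvb : ∀ y, Bdd (v y) := fun y => ⟨1, hv y⟩
  have hlb : ∀ y, Bdd fun x => (l.map fun h => v (h * y) x).sum := fun y =>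
    Bdd.listSum (F := fun h x => v (h * y) x) (fun h => hvb _) l
  have hlen : ∀ y x, |(l.map fun h => v (h * y) x).sum| ≤ n := fun y x => by
    rw [← hl]
    clear hl hQ hlb
    induction l with
    | nil => simp
    | cons a l ih =>
      simp only [List.map_cons, List.sum_cons, List.length_cons, Nat.cast_add, Nat.cast_one]
      exact (abs_add_le _ _).trans (by linarith [hv (a * y) x])
  have hfl : ∀ y x, |f x * (l.map fun h => v (h * y) x).sum| ≤ n := fun y x => by
    rw [abs_mul]
    calc _ ≤ 1 * (n : ℝ) := mul_le_mul (hf x) (hlen y x) (abs_nonneg _) zero_le_one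
      _ = n := one_mul _
  have hsum : (n : ℝ) * (M fun y => m fun x => f x * v y x) =
      M fun y => m fun x => f x * (l.map fun h => v (h * y) x).sum := by
    simp_rw [← List.sum_map_mul_left]
    simp_rw [m.listSum (fun h x => f x * v (h * _) x)]
    rw [M.listSum (fun h y => m fun x => f x * v (h * y) x)]
    simp_rw [hM.left _ (fun y => m fun x => f x * v y x)
      (m.bdd_apply fun y x => abs_mul_le_one (hf x) (hv y x))]
    simp [hl]
  rw [hsum]
  have h1 := M.sq_mul_le (f := fun _ => 1) (V := fun y => m fun x => f x *
    (l.map fun h => v (h * y) x).sum) (by simp) (m.bdd_apply hfl)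
  simp only [one_mul] at h1
  refine h1.trans (M.mono (m.bdd_apply hfl).sq ?_ fun y => m.sq_mul_le hf (hlb y))
  exact m.bdd_apply (C := (n : ℝ) ^ 2) fun y x => by
    rw [abs_pow]; exact pow_le_pow_left₀ (abs_nonneg _) (hlen y x) 2

/-- Ergodic averages along translates of a set permuted by the action factor. -/
theorem ergodic_average {Γ : Type*} [Group Γ] [MulAction Γ X] {M : Mean G} (hM : BiInv M)
    {m : Mean X} (hm : m.Inv Γ) (he : IsErg Γ m) (H : Set X) (σ : G → Γ)
    (hσ : ∀ g : Γ, ∃ l r : G, ∀ y x, σ y • g⁻¹ • x ∈ H ↔ σ (l * y * r) • x ∈ H) (B : Set X) :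
    (M fun y => m fun x => ind B x * ind H (σ y • x)) = m (ind B) * m (ind H) := by
  have hb : ∀ B : Set X, ∀ y x, |ind B x * ind H (σ y • x)| ≤ 1 := fun B y x =>
    abs_mul_le_one (abs_ind_le _ _) (abs_ind_le _ _)
  have hu : (M fun y => m fun x => ind Set.univ x * ind H (σ y • x)) = m (ind H) := by
    have : ∀ y, (m fun x => ind Set.univ x * ind H (σ y • x)) = m (ind H) := fun y => by
      simp_rw [ind_of_mem (Set.mem_univ _), one_mul]
      exact hm _ _ (bdd_ind H)
    simp_rw [this, M.const]
  have key := he (fun B => M fun y => m fun x => ind B x * ind H (σ y • x)) ?_ ?_ ?_ B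
  · rw [key, hu, mul_comm]
  · refine ⟨fun B => M.nonneg (m.bdd_apply (hb B)) fun y => m.nonneg ⟨1, hb B y⟩ fun x =>
      mul_nonneg (ind_nonneg _ _) (ind_nonneg _ _), fun A B h => ?_⟩
    simp_rw [ind_union h, add_mul, m.add, M.add]
  · intro g B
    obtain ⟨l, r, hlr⟩ := hσ g
    have h1 : ∀ y, (m fun x => ind ((g • ·) ⁻¹' B) x * ind H (σ y • x)) =
        m fun x => ind B x * ind H (σ (l * y * r) • x) := fun y => by
      rw [← hm g (fun x => ind B x * ind H (σ (l * y * r) • x)) ⟨1, hb B _⟩]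
      congr 1
      funext x
      congr 1
      have := hlr y (g • x)
      rw [inv_smul_smul] at this
      by_cases h : σ y • x ∈ H
      · rw [ind_of_mem h, ind_of_mem (this.1 h)]
      · rw [ind_of_notMem h, ind_of_notMem (mt this.2 h)]
    dsimp only
    simp_rw [h1]
    have h2 := hM.right r (fun y => m fun x => ind B x * ind H (σ (l * y) • x))
      (m.bdd_apply fun y x => hb B _ x)
    simp_rw [← mul_assoc] at h2
    rw [h2]
    exact hM.left l (fun y => m fun x => ind B x * ind H (σ y • x)) (m.bdd_apply (hb B))
  · intro B
    refine M.le_of_le (m.bdd_apply (hb B)) fun y => m.mono ⟨1, hb B y⟩ (bdd_ind B) fun x => ?_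
    exact mul_le_of_le_one_right (ind_nonneg _ _) (ind_le_one _ _)

end SchurMean

namespace SchurMean

variable {G X : Type*} [Group G] [MulAction (G × G) X]

/-- The left factor of `G × G`. -/
def leftEmb (y : G) : G × G := (y, 1)

/-- The right factor of `G × G`. -/
def rightEmb (y : G) : G × G := (1, y)

/-- The diagonal of `G × G`. -/
def diagEmb (y : G) : G × G := (y, y)

/-- Invariance of a function under the translations listed by `ρ`. -/
def Fixed {ι : Type*} (ρ : G → G × G) (a : X → ι) : Prop := ∀ y x, a (ρ y • x) = a x

/-- The trilinear form counting the configurations `x`, `(1, y) • x`, `(y, y) • x`. -/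
noncomputable def tri (M : Mean G) (m : Mean X) (f₀ f₁ f₂ : X → ℝ) : ℝ :=
  M fun y => m fun x => f₀ x * (f₁ (rightEmb y • x) * f₂ (diagEmb y • x))

theorem finite_range_mul {f g : X → ℝ} (hf : (Set.range f).Finite) (hg : (Set.range g).Finite) :
    (Set.range fun x => f x * g x).Finite := by
  refine (hf.image2 (· * ·) hg).subset ?_
  rintro _ ⟨x, rfl⟩
  exact ⟨_, ⟨x, rfl⟩, _, ⟨x, rfl⟩, rfl⟩

theorem finite_range_comp {ι Y Z : Type*} {f : Y → ι} (hf : (Set.range f).Finite) (φ : Z → Y) :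
    (Set.range fun z => f (φ z)).Finite :=
  hf.subset (Set.range_comp_subset_range φ f)

theorem BiInv.inv_map_prod {M : Mean G} (hM : BiInv M) {φ : G × G → G × G}
    (hφ : ∀ g : G × G, ∃ l r l' r' : G, ∀ h y, g * φ (h, y) = φ (l * h * r, l' * y * r')) :
    ((M.prod M).map φ).Inv (G × G) := by
  rintro g f ⟨C, hC⟩
  obtain ⟨l, r, l', r', h⟩ := hφ g
  simp only [Mean.map_apply, Mean.prod_apply, smul_eq_mul, h]
  have h1 : ∀ h, (M fun y => f (φ (h, l' * y * r'))) = M fun y => f (φ (h, y)) := fun h => by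
    have h2 := hM.right r' (fun y => f (φ (h, l' * y))) ⟨C, fun y => hC _⟩
    simp_rw [← mul_assoc] at h2
    rw [h2]
    exact hM.left l' (fun y => f (φ (h, y))) ⟨C, fun y => hC _⟩
  simp_rw [h1]
  have h2 := hM.right r (fun h => M fun y => f (φ (l * h, y))) (M.bdd_apply fun h y => hC _)
  simp_rw [← mul_assoc] at h2
  rw [h2]
  exact hM.left l (fun h => M fun y => f (φ (h, y))) (M.bdd_apply fun h y => hC _)

/-- `n` on `(G × G) × X` is an ergodic extension of `m` in which `k` correlates with a product of
a `ρ`-invariant and a `ρ'`-invariant function. -/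
def HasCorrelation (m : Mean X) (k : X → ℝ) (c : ℝ) (ρ ρ' : G → G × G) : Prop :=
  ∃ n : Mean ((G × G) × X), n.Inv (G × G) ∧ IsErg (G × G) n ∧
    (∀ f : X → ℝ, Bdd f → n (fun x => f x.2) = m f) ∧
    ∃ a b : (G × G) × X → ℝ, (Set.range a).Finite ∧ (Set.range b).Finite ∧
      (∀ x, |a x| ≤ 1) ∧ (∀ x, |b x| ≤ 1) ∧ Fixed ρ a ∧ Fixed ρ' b ∧
      c ≤ n fun z => k z.2 * (a z * b z)

theorem hasCorrelation_of_le {M : Mean G} (hM : BiInv M) {m : Mean X} (hm : m.Inv (G × G))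
    (he : IsErg (G × G) m) {k : X → ℝ} (hk : (Set.range k).Finite) {c : ℝ} {ρ ρ' : G → G × G}
    {φ : G × G → G × G}
    (hφ : ∀ g : G × G, ∃ l r l' r' : G, ∀ h y, g * φ (h, y) = φ (l * h * r, l' * y * r'))
    (a b : (G × G) × X → ℝ) (ha : (Set.range a).Finite) (hb : (Set.range b).Finite)
    (ha1 : ∀ x, |a x| ≤ 1) (hb1 : ∀ x, |b x| ≤ 1) (hρ : Fixed ρ a) (hρ' : Fixed ρ' b)
    (h : c ≤ M fun h => M fun y => m fun x =>
      k x * (a (φ (h, y), x) * b (φ (h, y), x))) :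
    HasCorrelation m k c ρ ρ' := by
  obtain ⟨n, h1, h2, h3, h4⟩ := exists_ergodic_extension (hM.inv_map_prod hφ) hm he
    (F := fun z => k z.2 * (a z * b z))
    (finite_range_mul (finite_range_comp hk _) (finite_range_mul ha hb))
  exact ⟨n, h1, h2, h3, a, b, ha, hb, ha1, hb1, hρ, hρ', h.trans h4⟩

variable {M : Mean G} {m : Mean X} {f₀ f₁ f₂ k : X → ℝ}

theorem hasCorrelation_middle (hM : BiInv M) (hm : m.Inv (G × G)) (he : IsErg (G × G) m)
    (hk : (Set.range k).Finite) (hf₂ : (Set.range f₂).Finite) (h0 : ∀ x, |f₀ x| ≤ 1)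
    (hk1 : ∀ x, |k x| ≤ 1) (h2 : ∀ x, |f₂ x| ≤ 1) :
    HasCorrelation (G := G) m k (tri M m f₀ k f₂ ^ 2) rightEmb leftEmb := by
  refine hasCorrelation_of_le hM hm he hk (φ := fun p => (p.2⁻¹, p.1⁻¹)) ?_
    (fun z => k (((1 : G), z.1.2⁻¹) • z.2))
    (fun z => f₂ ((z.1.1⁻¹, (1 : G)) • z.2) * f₂ ((z.1.2⁻¹ * z.1.1⁻¹, z.1.2⁻¹) • z.2))
    (finite_range_comp hk _) (finite_range_mul (finite_range_comp hf₂ _) (finite_range_comp hf₂ _))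
    (fun z => hk1 _) (fun z => abs_mul_le_one (h2 _) (h2 _)) ?_ ?_ ?_
  · rintro ⟨t, s⟩
    exact ⟨1, s⁻¹, 1, t⁻¹, fun h y => by simp⟩
  · rintro y ⟨⟨p, q⟩, u⟩
    simp [rightEmb, smul_smul]
  · rintro y ⟨⟨p, q⟩, u⟩
    simp [leftEmb, smul_smul, mul_assoc]
  · refine (vanDerCorput hM m (v := fun y x => k (rightEmb y • x) * f₂ (diagEmb y • x))
      (fun y x => abs_mul_le_one (hk1 _) (h2 _)) h0).trans_eq ?_
    congr 1; funext h
    congr 1; funext y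
    rw [← hm (rightEmb y) _ ⟨1, fun x => abs_mul_le_one (hk1 _) (abs_mul_le_one (hk1 _)
      (abs_mul_le_one (h2 _) (h2 _)))⟩]
    congr 1; funext x
    simp only [rightEmb, diagEmb, smul_smul, Prod.mk_mul_mk, inv_inv, one_mul, mul_one]
    ring

theorem hasCorrelation_last (hM : BiInv M) (hm : m.Inv (G × G)) (he : IsErg (G × G) m)
    (hk : (Set.range k).Finite) (hf₁ : (Set.range f₁).Finite) (h0 : ∀ x, |f₀ x| ≤ 1)
    (hk1 : ∀ x, |k x| ≤ 1) (h1 : ∀ x, |f₁ x| ≤ 1) :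
    HasCorrelation (G := G) m k (tri M m f₀ f₁ k ^ 2) leftEmb diagEmb := by
  refine hasCorrelation_of_le hM hm he hk (φ := fun p => (p.2, p.1⁻¹)) ?_
    (fun z => f₁ ((z.1.1⁻¹, (1 : G)) • z.2) * f₁ ((z.1.1⁻¹, z.1.2⁻¹) • z.2))
    (fun z => k ((z.1.2⁻¹, z.1.2⁻¹) • z.2))
    (finite_range_mul (finite_range_comp hf₁ _) (finite_range_comp hf₁ _)) (finite_range_comp hk _)
    (fun z => abs_mul_le_one (h1 _) (h1 _)) (fun z => hk1 _) ?_ ?_ ?_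
  · rintro ⟨t, s⟩
    exact ⟨1, s⁻¹, t, 1, fun h y => by simp⟩
  · rintro y ⟨⟨p, q⟩, u⟩
    simp [leftEmb, smul_smul, mul_assoc]
  · rintro y ⟨⟨p, q⟩, u⟩
    simp [diagEmb, smul_smul, mul_assoc]
  · refine (vanDerCorput hM m (v := fun y x => f₁ (rightEmb y • x) * k (diagEmb y • x))
      (fun y x => abs_mul_le_one (h1 _) (hk1 _)) h0).trans_eq ?_
    congr 1; funext h
    congr 1; funext y
    rw [← hm (diagEmb y) _ ⟨1, fun x => abs_mul_le_one (hk1 _) (abs_mul_le_one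
      (abs_mul_le_one (h1 _) (h1 _)) (hk1 _))⟩]
    congr 1; funext x
    simp only [rightEmb, diagEmb, smul_smul, Prod.mk_mul_mk, inv_inv, one_mul, inv_mul_cancel]
    ring

theorem hasCorrelation_first (hM : BiInv M) (hm : m.Inv (G × G)) (he : IsErg (G × G) m)
    (hk : (Set.range k).Finite) (hf₁ : (Set.range f₁).Finite)
    (hk1 : ∀ x, |k x| ≤ 1) (h1 : ∀ x, |f₁ x| ≤ 1) (h2 : ∀ x, |f₂ x| ≤ 1) :
    HasCorrelation (G := G) m k (tri M m k f₁ f₂ ^ 2) rightEmb diagEmb := by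
  refine hasCorrelation_of_le hM.inv hm he hk (φ := fun p => (p.1⁻¹, p.2)) ?_
    (fun z => f₁ (((1 : G), z.1.2⁻¹) • z.2) * f₁ ((z.1.1⁻¹, z.1.2⁻¹) • z.2))
    (fun z => k ((z.1.1⁻¹, z.1.1⁻¹) • z.2))
    (finite_range_mul (finite_range_comp hf₁ _) (finite_range_comp hf₁ _)) (finite_range_comp hk _)
    (fun z => abs_mul_le_one (h1 _) (h1 _)) (fun z => hk1 _) ?_ ?_ ?_
  · rintro ⟨t, s⟩
    exact ⟨1, t⁻¹, s, 1, fun h y => by simp⟩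
  · rintro y ⟨⟨p, q⟩, u⟩
    simp [rightEmb, smul_smul, mul_assoc]
  · rintro y ⟨⟨p, q⟩, u⟩
    simp [diagEmb, smul_smul, mul_assoc]
  · have hL : tri M m k f₁ f₂ = M.map (·⁻¹) fun y => m fun x =>
        f₂ x * (k (diagEmb y • x) * f₁ (leftEmb y • x)) := by
      rw [Mean.map_apply]
      unfold tri
      congr 1; funext y
      rw [← hm (diagEmb y) _ ⟨1, fun x => abs_mul_le_one (h2 _) (abs_mul_le_one (hk1 _) (h1 _))⟩]
      congr 1; funext x
      simp only [rightEmb, leftEmb, diagEmb, smul_smul, Prod.mk_mul_mk, one_mul, inv_mul_cancel]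
      rw [← Prod.one_eq_mk, one_smul]
      ring
    rw [hL]
    refine (vanDerCorput hM.inv m (v := fun y x => k (diagEmb y • x) * f₁ (leftEmb y • x))
      (fun y x => abs_mul_le_one (hk1 _) (h1 _)) h2).trans_eq ?_
    congr 1; funext h
    congr 1; funext y
    rw [← hm (diagEmb y) _ ⟨1, fun x => abs_mul_le_one (hk1 _) (abs_mul_le_one
      (abs_mul_le_one (h1 _) (h1 _)) (hk1 _))⟩]
    congr 1; funext x
    simp only [leftEmb, diagEmb, smul_smul, Prod.mk_mul_mk, inv_inv, one_mul, inv_mul_cancel]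
    ring

/-- The three families of translations leaving the coordinates of a cell invariant. -/
def emb (j : Fin 3) : G → G × G := ![rightEmb, leftEmb, diagEmb] j

/-- The first coordinate on which the `i`-th point of a configuration depends. -/
def src (i : Fin 3) : Fin 3 := ![0, 0, 1] i

/-- The second coordinate on which the `i`-th point of a configuration depends. -/
def tgt (i : Fin 3) : Fin 3 := ![2, 1, 2] i

theorem hasCorrelation_tri (hM : BiInv M) (hm : m.Inv (G × G)) (he : IsErg (G × G) m)
    {f : Fin 3 → X → ℝ} (hf : ∀ i, (Set.range (f i)).Finite) (hf1 : ∀ i x, |f i x| ≤ 1)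
    (i : Fin 3) :
    HasCorrelation (G := G) m (f i) (tri M m (f 0) (f 1) (f 2) ^ 2) (emb (src i))
      (emb (tgt i)) := by
  fin_cases i
  · exact hasCorrelation_first hM hm he (hf 0) (hf 1) (hf1 0) (hf1 1) (hf1 2)
  · exact hasCorrelation_middle hM hm he (hf 1) (hf 2) (hf1 0) (hf1 1) (hf1 2)
  · exact hasCorrelation_last hM hm he (hf 2) (hf 1) (hf1 0) (hf1 2) (hf1 1)

end SchurMean

namespace SchurMean

universe u

/-- An ergodic mean-preserving system with a distinguished set. -/
structure Sys (G : Type u) [Group G] where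
  /-- The underlying space. -/
  X : Type u
  [act : MulAction (G × G) X]
  /-- The invariant mean. -/
  m : Mean X
  inv : m.Inv (G × G)
  erg : IsErg (G × G) m
  /-- The distinguished set. -/
  A : Set X

attribute [instance] Sys.act

variable {G : Type u} [Group G]

/-- A factor map exhibiting `𝒴` as an extension of `𝒳`. -/
structure Ext (𝒴 𝒳 : Sys G) where
  /-- The factor map. -/
  π : 𝒴.X → 𝒳.X
  map_smul : ∀ (g : G × G) y, π (g • y) = g • π y
  mean_comp : ∀ f, Bdd f → 𝒴.m (fun y => f (π y)) = 𝒳.m f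
  preimage : π ⁻¹' 𝒳.A = 𝒴.A

namespace Ext

variable {𝒳 𝒴 𝒵 : Sys G}

/-- Every system extends itself. -/
def refl (𝒳 : Sys G) : Ext 𝒳 𝒳 := ⟨id, fun _ _ => rfl, fun _ _ => rfl, rfl⟩

/-- Composition of extensions. -/
def trans (e : Ext 𝒵 𝒴) (e' : Ext 𝒴 𝒳) : Ext 𝒵 𝒳 where
  π z := e'.π (e.π z)
  map_smul g z := by rw [e.map_smul, e'.map_smul]
  mean_comp f hf := by
    rw [e.mean_comp (fun y => f (e'.π y)) (hf.comp _), e'.mean_comp f hf]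
  preimage := by
    rw [← e.preimage, ← e'.preimage]; rfl

theorem ind_comp (e : Ext 𝒴 𝒳) (y : 𝒴.X) : ind 𝒳.A (e.π y) = ind 𝒴.A y := by
  rw [← e.preimage]
  exact congrFun (SchurMean.ind_comp 𝒳.A e.π) y

theorem tri_eq (e : Ext 𝒴 𝒳) (M : Mean G) :
    tri M 𝒴.m (ind 𝒴.A) (ind 𝒴.A) (ind 𝒴.A) = tri M 𝒳.m (ind 𝒳.A) (ind 𝒳.A) (ind 𝒳.A) := by
  unfold tri
  congr 1
  funext y
  rw [← e.mean_comp _ ((bdd_ind _).mul (((bdd_ind _).comp _).mul ((bdd_ind _).comp _)))]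
  simp_rw [← e.map_smul, e.ind_comp]

end Ext

/-- Three finite labellings by invariant functions together with functions of pairs of labels. -/
structure Part (𝒳 : Sys G) where
  /-- The type of labels. -/
  ι : Type
  [fin : Finite ι]
  /-- The labellings. -/
  α : Fin 3 → 𝒳.X → ι
  fixed : ∀ j, Fixed (emb (G := G) j) (α j)
  /-- The functions of pairs of labels. -/
  φ : Fin 3 → ι → ι → ℝ

attribute [instance] Part.fin

namespace Part

variable {𝒳 𝒴 𝒵 : Sys G}

/-- The structured functions determined by a labelling. -/
def w (P : Part 𝒳) (i : Fin 3) (x : 𝒳.X) : ℝ := P.φ i (P.α (src i) x) (P.α (tgt i) x)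

/-- The error of the structured approximation of the distinguished set. -/
noncomputable def k (P : Part 𝒳) (i : Fin 3) (x : 𝒳.X) : ℝ := ind 𝒳.A x - P.w i x

/-- The total squared error of the structured approximation. -/
noncomputable def energy (P : Part 𝒳) : ℝ := ∑ i, 𝒳.m fun x => P.k i x ^ 2

theorem finite_range_w (P : Part 𝒳) (i : Fin 3) : (Set.range (P.w i)).Finite := by
  refine (Set.finite_range fun p : P.ι × P.ι => P.φ i p.1 p.2).subset ?_
  rintro _ ⟨x, rfl⟩
  exact ⟨(P.α (src i) x, P.α (tgt i) x), rfl⟩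

theorem bdd_w (P : Part 𝒳) (i : Fin 3) : Bdd (P.w i) := Bdd.of_finite_range (P.finite_range_w i)

theorem bdd_k (P : Part 𝒳) (i : Fin 3) : Bdd (P.k i) := (bdd_ind _).sub (P.bdd_w i)

theorem finite_range_k (P : Part 𝒳) (i : Fin 3) : (Set.range (P.k i)).Finite := by
  refine ((finite_range_ind 𝒳.A).image2 (· - ·) (P.finite_range_w i)).subset ?_
  rintro _ ⟨x, rfl⟩
  exact ⟨_, ⟨x, rfl⟩, _, ⟨x, rfl⟩, rfl⟩

theorem energy_nonneg (P : Part 𝒳) : 0 ≤ P.energy :=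
  Finset.sum_nonneg fun i _ => 𝒳.m.nonneg (P.bdd_k i).sq fun _ => sq_nonneg _

/-- The pullback of a labelling to an extension. -/
def pull (e : Ext 𝒴 𝒳) (P : Part 𝒳) : Part 𝒴 where
  ι := P.ι
  α j y := P.α j (e.π y)
  fixed j g y := by dsimp only; rw [e.map_smul, P.fixed j]
  φ := P.φ

theorem pull_k (e : Ext 𝒴 𝒳) (P : Part 𝒳) (i : Fin 3) (y : 𝒴.X) :
    (P.pull e).k i y = P.k i (e.π y) := by
  unfold k; rw [e.ind_comp]; rfl

theorem energy_pull (e : Ext 𝒴 𝒳) (P : Part 𝒳) : (P.pull e).energy = P.energy := by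
  unfold energy
  simp_rw [pull_k]
  exact Finset.sum_congr rfl fun i _ => e.mean_comp (fun x => P.k i x ^ 2) (P.bdd_k i).sq

/-- Linear combinations of structured functions. -/
def comb (s t : ℝ) (P Q : Part 𝒳) : Part 𝒳 where
  ι := P.ι × Q.ι
  α j x := (P.α j x, Q.α j x)
  fixed j g x := by dsimp only; rw [P.fixed j, Q.fixed j]
  φ i p q := s * P.φ i p.1 q.1 + t * Q.φ i p.2 q.2

theorem comb_w (s t : ℝ) (P Q : Part 𝒳) (i : Fin 3) (x : 𝒳.X) :
    (comb s t P Q).w i x = s * P.w i x + t * Q.w i x := rfl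

/-- Post-composition of the structured functions. -/
def post (P : Part 𝒳) (ψ : Fin 3 → ℝ → ℝ) : Part 𝒳 where
  ι := P.ι
  α := P.α
  fixed := P.fixed
  φ i p q := ψ i (P.φ i p q)

theorem post_w (P : Part 𝒳) (ψ : Fin 3 → ℝ → ℝ) (i : Fin 3) (x : 𝒳.X) :
    (P.post ψ).w i x = ψ i (P.w i x) := rfl

theorem exists_clip (P : Part 𝒳) :
    ∃ Q : Part 𝒳, (∀ i x, 0 ≤ Q.w i x ∧ Q.w i x ≤ 1) ∧ Q.energy ≤ P.energy := by
  refine ⟨P.post fun _ t => max 0 (min 1 t), fun i x => ⟨le_max_left _ _, ?_⟩, ?_⟩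
  · exact max_le zero_le_one (min_le_left _ _)
  · refine Finset.sum_le_sum fun i _ => 𝒳.m.mono (bdd_k _ i).sq (P.bdd_k i).sq fun x => ?_
    unfold k
    rw [post_w, sq_le_sq]
    by_cases h : x ∈ 𝒳.A
    · rw [ind_of_mem h]
      rcases le_total 1 (P.w i x) with h1 | h1
      · simp [h1]
      · rw [min_eq_right h1, abs_of_nonneg (by simp [h1]), abs_of_nonneg (by linarith)]
        linarith [le_max_right 0 (P.w i x)]
    · rw [ind_of_notMem h, zero_sub, zero_sub, abs_neg, abs_neg,
        abs_of_nonneg (le_max_left _ _)]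
      exact max_le (abs_nonneg _) ((min_le_right _ _).trans (le_abs_self _))

theorem exists_mul (i : Fin 3) {a b : 𝒳.X → ℝ} (ha : (Set.range a).Finite)
    (hb : (Set.range b).Finite) (hρ : Fixed (emb (G := G) (src i)) a)
    (hρ' : Fixed (emb (G := G) (tgt i)) b) :
    ∃ Q : Part 𝒳, (∀ x, Q.w i x = a x * b x) ∧ ∀ j, j ≠ i → ∀ x, Q.w j x = 0 := by
  classical
  have hne : tgt i ≠ src i := by fin_cases i <;> simp [src, tgt]
  have : Finite ↑(Set.range a ∪ Set.range b ∪ {0}) :=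
    ((ha.union hb).union (Set.finite_singleton 0)).to_subtype
  let α : Fin 3 → 𝒳.X → ℝ := fun j x => if j = src i then a x else if j = tgt i then b x else 0
  have hα : ∀ j x, α j x ∈ Set.range a ∪ Set.range b ∪ {0} := fun j x => by
    simp only [α]
    split_ifs
    · exact Or.inl (Or.inl ⟨x, rfl⟩)
    · exact Or.inl (Or.inr ⟨x, rfl⟩)
    · exact Or.inr rfl
  refine ⟨⟨↑(Set.range a ∪ Set.range b ∪ {0}), fun j x => ⟨α j x, hα j x⟩, fun j g x => ?_,
    fun j p q => if j = i then p * q else 0⟩, fun x => ?_, fun j hj x => ?_⟩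
  · apply Subtype.ext
    simp only [α]
    split_ifs with h1 h2
    · rw [h1, hρ]
    · rw [h2, hρ']
    · rfl
  · simp [w, α, hne]
  · simp [w, hj]

/-- Optimality up to `ε` among all structured approximations on extensions. -/
def IsOpt (P : Part 𝒳) (ε : ℝ) : Prop :=
  ∀ (𝒵 : Sys G), Ext 𝒵 𝒳 → ∀ Q : Part 𝒵, P.energy ≤ Q.energy + ε

theorem exists_isOpt (𝒳 : Sys G) {ε : ℝ} (hε : 0 < ε) :
    ∃ (𝒴 : Sys G) (_ : Ext 𝒴 𝒳) (P : Part 𝒴), P.IsOpt ε ∧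
      ∀ i x, 0 ≤ P.w i x ∧ P.w i x ≤ 1 := by
  let S : Set ℝ := {r | ∃ (𝒴 : Sys G) (_ : Ext 𝒴 𝒳) (P : Part 𝒴), P.energy = r}
  have hne : S.Nonempty := ⟨_, 𝒳, Ext.refl 𝒳,
    ⟨Unit, fun _ _ => (), fun _ _ _ => rfl, fun _ _ _ => 0⟩, rfl⟩
  have hbdd : BddBelow S := ⟨0, by rintro _ ⟨_, _, P, rfl⟩; exact P.energy_nonneg⟩
  obtain ⟨_, ⟨𝒴, e, P, rfl⟩, hP⟩ := Real.lt_sInf_add_pos hne hε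
  obtain ⟨Q, hQ, hQP⟩ := P.exists_clip
  refine ⟨𝒴, e, Q, fun 𝒵 e' R => ?_, hQ⟩
  have := csInf_le hbdd ⟨𝒵, e'.trans e, R, rfl⟩
  linarith

theorem IsOpt.inner_le {P : Part 𝒳} {t : ℝ} (ht : 0 < t) (h : P.IsOpt (t ^ 2)) (e : Ext 𝒵 𝒳)
    (Q : Part 𝒵) (i : Fin 3) (hQ : ∀ x, |Q.w i x| ≤ 1) (hQ' : ∀ j, j ≠ i → ∀ x, Q.w j x = 0) :
    (𝒵.m fun z => P.k i (e.π z) * Q.w i z) ≤ t := by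
  have h1 := h 𝒵 e (comb 1 t (P.pull e) Q)
  have hk : ∀ j z, (comb 1 t (P.pull e) Q).k j z ^ 2 = (P.pull e).k j z ^ 2 -
      (2 * t * ((P.pull e).k j z * Q.w j z) - t ^ 2 * Q.w j z ^ 2) := fun j z => by
    simp only [k, comb_w]; ring
  have h2 : (comb 1 t (P.pull e) Q).energy = P.energy -
      (2 * t * (𝒵.m fun z => P.k i (e.π z) * Q.w i z) - t ^ 2 * 𝒵.m fun z => Q.w i z ^ 2) := by
    rw [← energy_pull e]
    unfold energy
    simp_rw [hk, Mean.sub, Mean.smul, Finset.sum_sub_distrib]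
    have h5 : ∀ j, j ≠ i → (𝒵.m fun z => (P.pull e).k j z * Q.w j z) = 0 := fun j hj => by
      simp [hQ' j hj, Mean.const]
    have h6 : ∀ j, j ≠ i → (𝒵.m fun z => Q.w j z ^ 2) = 0 := fun j hj => by
      simp [hQ' j hj, Mean.const]
    rw [Fintype.sum_eq_single (a := i)
      (f := fun j => 2 * t * 𝒵.m fun z => (P.pull e).k j z * Q.w j z)
      fun j hj => by rw [h5 j hj, mul_zero],
      Fintype.sum_eq_single (a := i) (f := fun j => t ^ 2 * 𝒵.m fun z => Q.w j z ^ 2)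
      fun j hj => by rw [h6 j hj, mul_zero]]
    simp_rw [pull_k]
  have h3 : (𝒵.m fun z => Q.w i z ^ 2) ≤ 1 :=
    𝒵.m.le_of_le (Q.bdd_w i).sq fun z => (sq_le_one_iff_abs_le_one _).2 (hQ z)
  rw [h2] at h1
  have h4 : t * (𝒵.m fun z => P.k i (e.π z) * Q.w i z) ≤ t * t := by nlinarith [sq_nonneg t]
  exact le_of_mul_le_mul_left h4 ht

theorem IsOpt.abs_tri_le {P : Part 𝒳} {t : ℝ} (ht : 0 < t) (h : P.IsOpt (t ^ 4)) {M : Mean G}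
    (hM : BiInv M) {f : Fin 3 → 𝒳.X → ℝ} (hf : ∀ i, (Set.range (f i)).Finite)
    (hf1 : ∀ i x, |f i x| ≤ 1) (i : Fin 3) (hi : f i = P.k i) :
    |tri M 𝒳.m (f 0) (f 1) (f 2)| ≤ t := by
  refine abs_le_of_sq_le_sq ?_ ht.le
  obtain ⟨n, h1, h2, h3, a, b, ha, hb, ha1, hb1, hρ, hρ', hc⟩ :=
    hasCorrelation_tri hM 𝒳.inv 𝒳.erg hf hf1 i
  refine hc.trans ?_
  let 𝒵 : Sys G := ⟨(G × G) × 𝒳.X, n, h1, h2, Prod.snd ⁻¹' 𝒳.A⟩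
  let e : Ext 𝒵 𝒳 := ⟨Prod.snd, fun _ _ => rfl, h3, rfl⟩
  obtain ⟨Q, hQ, hQ'⟩ := exists_mul (𝒳 := 𝒵) i ha hb hρ hρ'
  have h4 := IsOpt.inner_le (t := t ^ 2) (by positivity) (by rwa [← pow_mul]) e Q i
    (fun x => by rw [hQ]; exact abs_mul_le_one (ha1 x) (hb1 x)) hQ'
  simp_rw [hQ] at h4
  rw [hi]
  exact h4

theorem IsOpt.sq_dist_le {P : Part 𝒳} {η : ℝ} (h : P.IsOpt η) (e : Ext 𝒴 𝒳) {P' : Part 𝒴}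
    (h' : P'.IsOpt η) (i : Fin 3) :
    (𝒴.m fun y => (P'.w i y - P.w i (e.π y)) ^ 2) ≤ 6 * η := by
  have h1 := h 𝒴 e P'
  have h2 := h' 𝒴 (Ext.refl 𝒴) (comb 2⁻¹ 2⁻¹ (P.pull e) P')
  have hk : ∀ j z, (comb 2⁻¹ 2⁻¹ (P.pull e) P').k j z ^ 2 = 2⁻¹ * (P.pull e).k j z ^ 2 +
      (2⁻¹ * P'.k j z ^ 2 - 4⁻¹ * (P'.w j z - P.w j (e.π z)) ^ 2) := fun j z => by
    have : P.w j (e.π z) = (P.pull e).w j z := rfl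
    simp only [k, comb_w, this]; ring
  have h3 : (comb 2⁻¹ 2⁻¹ (P.pull e) P').energy = 2⁻¹ * P.energy + (2⁻¹ * P'.energy -
      4⁻¹ * ∑ j, 𝒴.m fun y => (P'.w j y - P.w j (e.π y)) ^ 2) := by
    rw [← energy_pull e]
    unfold energy
    simp_rw [hk, Mean.add, Mean.sub, Mean.smul, Finset.sum_add_distrib, Finset.sum_sub_distrib,
      Finset.mul_sum]
  have h4 : (𝒴.m fun y => (P'.w i y - P.w i (e.π y)) ^ 2) ≤
      ∑ j, 𝒴.m fun y => (P'.w j y - P.w j (e.π y)) ^ 2 :=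
    Finset.single_le_sum (f := fun j => 𝒴.m fun y => (P'.w j y - P.w j (e.π y)) ^ 2)
      (fun j _ => 𝒴.m.nonneg ((P'.bdd_w j).sub ((P.bdd_w j).comp _)).sq fun _ => sq_nonneg _)
      (Finset.mem_univ i)
  linarith

end Part

end SchurMean

namespace SchurMean

section counting

variable {G X : Type*} [Group G] [MulAction (G × G) X]

theorem leftEmb_smul_rightEmb_smul (y : G) (x : X) :
    leftEmb y • rightEmb y • x = diagEmb y • x := by
  rw [smul_smul]; simp [leftEmb, rightEmb, diagEmb]

theorem Fixed.mem_iff {ρ : G → G × G} {B : Set X} (h : Fixed ρ (· ∈ B)) (y : G) (x : X) :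
    ρ y • x ∈ B ↔ x ∈ B := iff_of_eq (h y x)

variable {M : Mean G} {m : Mean X} (hM : BiInv M) (hm : m.Inv (G × G)) (he : IsErg (G × G) m)
include hM hm he

theorem average_of_fixed_left {H : Set X} (hH : Fixed (leftEmb (G := G)) (· ∈ H)) (B : Set X) :
    (M fun y => m fun x => ind B x * ind H (rightEmb y • x)) = m (ind B) * m (ind H) := by
  refine ergodic_average hM hm he H rightEmb (fun ⟨s, t⟩ => ⟨1, t⁻¹, fun y x => ?_⟩) B
  rw [smul_smul, ← hH.mem_iff s⁻¹ (rightEmb _ • x), smul_smul]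
  simp [leftEmb, rightEmb]

theorem average_of_fixed_diag {H : Set X} (hH : Fixed (diagEmb (G := G)) (· ∈ H)) (B : Set X) :
    (M fun y => m fun x => ind B (rightEmb y • x) * ind H (diagEmb y • x)) =
      m (ind B) * m (ind H) := by
  rw [← ergodic_average hM hm he H leftEmb (fun ⟨s, t⟩ => ⟨t, s⁻¹, fun y x => ?_⟩) B]
  · congr 1
    funext y
    rw [← hm (rightEmb y) _ ((bdd_ind B).mul ((bdd_ind H).comp _))]
    simp_rw [leftEmb_smul_rightEmb_smul]
  · rw [smul_smul, ← hH.mem_iff t (_ • x), smul_smul]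
    simp [leftEmb, diagEmb, mul_assoc]

theorem average_of_fixed_right {H : Set X} (hH : Fixed (rightEmb (G := G)) (· ∈ H)) (B : Set X) :
    (M fun y => m fun x => ind B (diagEmb y • x) * ind H x) = m (ind B) * m (ind H) := by
  rw [← ergodic_average hM hm he H (fun y => leftEmb y⁻¹) (fun ⟨s, t⟩ => ⟨s, 1, fun y x => ?_⟩) B]
  · congr 1
    funext y
    rw [← hm (diagEmb y) _ ((bdd_ind B).mul ((bdd_ind H).comp _))]
    congr 1
    funext x
    congr 1
    by_cases h : x ∈ H
    · rw [ind_of_mem h, ind_of_mem]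
      rw [← hH.mem_iff y] at h
      rw [smul_smul]
      simpa [leftEmb, diagEmb, rightEmb] using h
    · rw [ind_of_notMem h, ind_of_notMem]
      rw [← hH.mem_iff y] at h
      rw [smul_smul]
      simpa [leftEmb, diagEmb, rightEmb] using h
  · rw [smul_smul, ← hH.mem_iff t (_ • x), smul_smul]
    simp [leftEmb, rightEmb]

omit hM hm he in
theorem ind_smul_of_fixed {ρ : G → G × G} {B : Set X} (h : Fixed ρ (· ∈ B)) (y : G) (x : X) :
    ind B (ρ y • x) = ind B x := by
  by_cases hx : x ∈ B
  · rw [ind_of_mem hx, ind_of_mem ((h.mem_iff y x).2 hx)]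
  · rw [ind_of_notMem hx, ind_of_notMem (mt (h.mem_iff y x).1 hx)]

theorem half_le_count {a b c : Set X} {H : Fin 3 → Set X}
    (ha : Fixed (rightEmb (G := G)) (· ∈ a)) (hb : Fixed (leftEmb (G := G)) (· ∈ b))
    (hc : Fixed (diagEmb (G := G)) (· ∈ c))
    (h0 : 6 * m (ind (a ∩ c ∩ H 0)) ≤ m (ind (a ∩ c)))
    (h1 : 6 * m (ind (a ∩ b ∩ H 1)) ≤ m (ind (a ∩ b)))
    (h2 : 6 * m (ind (b ∩ c ∩ H 2)) ≤ m (ind (b ∩ c))) :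
    m (ind (a ∩ b ∩ c)) ^ 2 / 2 ≤ M fun y => m fun x =>
      ind (a ∩ c) x * ind b (rightEmb y • x) *
        (1 - ind (H 0) x - ind (H 1) (rightEmb y • x) - ind (H 2) (diagEmb y • x)) := by
  have hba : ∀ (y : G) (x : X), ind b (diagEmb y • x) = ind b (rightEmb y • x) := fun y x => by
    rw [← leftEmb_smul_rightEmb_smul, ind_smul_of_fixed hb]
  have e : ∀ (y : G) (x : X), ind (a ∩ c) x * ind b (rightEmb y • x) *
        (1 - ind (H 0) x - ind (H 1) (rightEmb y • x) - ind (H 2) (diagEmb y • x)) =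
      ind (a ∩ c) x * ind b (rightEmb y • x) - ind (a ∩ c ∩ H 0) x * ind b (rightEmb y • x) -
      ind (a ∩ b ∩ H 1) (rightEmb y • x) * ind c (diagEmb y • x) -
      ind (b ∩ c ∩ H 2) (diagEmb y • x) * ind a x := fun y x => by
    simp only [ind_inter, ind_smul_of_fixed ha, ind_smul_of_fixed hc, hba]; ring
  have e1 : ∀ (y : G) (x : X), ind (a ∩ c) x * ind b (rightEmb y • x) =
      ind (a ∩ b) (rightEmb y • x) * ind c (diagEmb y • x) := fun y x => by
    simp only [ind_inter, ind_smul_of_fixed ha, ind_smul_of_fixed hc]; ring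
  have e2 : ∀ (y : G) (x : X), ind (a ∩ c) x * ind b (rightEmb y • x) =
      ind (b ∩ c) (diagEmb y • x) * ind a x := fun y x => by
    simp only [ind_inter, ind_smul_of_fixed hc, hba]; ring
  have t0 := average_of_fixed_left hM hm he hb (a ∩ c)
  have t1 := average_of_fixed_diag hM hm he hc (a ∩ b)
  have t2 := average_of_fixed_right hM hm he ha (b ∩ c)
  simp_rw [← e1] at t1
  simp_rw [← e2] at t2
  simp_rw [e, Mean.sub]
  rw [average_of_fixed_left hM hm he hb, average_of_fixed_left hM hm he hb,
    average_of_fixed_diag hM hm he hc, average_of_fixed_right hM hm he ha]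
  have hpos : ∀ B : Set X, 0 ≤ m (ind B) := m.isFA.nonneg
  have l1 : m (ind (a ∩ b ∩ c)) ≤ m (ind (a ∩ c)) :=
    m.isFA.mono fun x hx => ⟨hx.1.1, hx.2⟩
  have l2 : m (ind (a ∩ b ∩ c)) ≤ m (ind b) := m.isFA.mono fun x hx => hx.1.2
  have l3 : m (ind (a ∩ b ∩ c)) ^ 2 ≤ m (ind (a ∩ c)) * m (ind b) := by
    rw [sq]; exact mul_le_mul l1 l2 (hpos _) (hpos _)
  have k0 := mul_le_mul_of_nonneg_right h0 (hpos b)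
  have k1 := mul_le_mul_of_nonneg_right h1 (hpos c)
  have k2 := mul_le_mul_of_nonneg_right h2 (hpos a)
  linarith

end counting

universe u

variable {G : Type u} [Group G] {𝒳 : Sys G}

theorem Part.IsOpt.tri_pos {P : Part 𝒳} {t θ : ℝ} (ht : 0 < t) (h : P.IsOpt (t ^ 4))
    (hw : ∀ i x, 0 ≤ P.w i x ∧ P.w i x ≤ 1) {M : Mean G} (hM : BiInv M) {a b c : Set 𝒳.X}
    {H : Fin 3 → Set 𝒳.X} (ha : Fixed (rightEmb (G := G)) (· ∈ a))
    (hb : Fixed (leftEmb (G := G)) (· ∈ b)) (hc : Fixed (diagEmb (G := G)) (· ∈ c))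
    (hH0 : 6 * 𝒳.m (ind (a ∩ c ∩ H 0)) ≤ 𝒳.m (ind (a ∩ c)))
    (hH1 : 6 * 𝒳.m (ind (a ∩ b ∩ H 1)) ≤ 𝒳.m (ind (a ∩ b)))
    (hH2 : 6 * 𝒳.m (ind (b ∩ c ∩ H 2)) ≤ 𝒳.m (ind (b ∩ c))) (hθ : 0 < θ)
    (hw0 : ∀ x ∈ a ∩ c, x ∉ H 0 → θ ≤ P.w 0 x) (hw1 : ∀ x ∈ a ∩ b, x ∉ H 1 → θ ≤ P.w 1 x)
    (hw2 : ∀ x ∈ b ∩ c, x ∉ H 2 → θ ≤ P.w 2 x)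
    (hlt : 3 * t < θ ^ 3 * (𝒳.m (ind (a ∩ b ∩ c)) ^ 2 / 2)) :
    0 < tri M 𝒳.m (ind 𝒳.A) (ind 𝒳.A) (ind 𝒳.A) := by
  have hba : ∀ (y : G) (x : 𝒳.X), ind b (diagEmb y • x) = ind b (rightEmb y • x) := fun y x => by
    rw [← leftEmb_smul_rightEmb_smul, ind_smul_of_fixed hb]
  have haw : ∀ i x, |P.w i x| ≤ 1 := fun i x => by rw [abs_of_nonneg (hw i x).1]; exact (hw i x).2
  have hak : ∀ i x, |P.k i x| ≤ 1 := fun i x => by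
    have h1 := ind_nonneg 𝒳.A x
    have h2 := ind_le_one 𝒳.A x
    unfold Part.k
    exact abs_le.2 ⟨by linarith [(hw i x).2], by linarith [(hw i x).1]⟩
  have hf := finite_range_ind 𝒳.A
  have r1 := (abs_le.1 <| h.abs_tri_le ht hM (f := ![fun x => ind 𝒳.A x * ind (a ∩ c) x, P.k 1,
      fun x => ind 𝒳.A x * ind b x])
      (by
        intro i; fin_cases i
        exacts [finite_range_mul hf (finite_range_ind _), P.finite_range_k 1,
          finite_range_mul hf (finite_range_ind _)])
      (by
        intro i x; fin_cases i
        exacts [abs_mul_le_one (abs_ind_le _ x) (abs_ind_le _ x), hak 1 x,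
          abs_mul_le_one (abs_ind_le _ x) (abs_ind_le _ x)]) 1 rfl).1
  have r2 := (abs_le.1 <| h.abs_tri_le ht hM (f := ![fun x => ind 𝒳.A x * ind (a ∩ c) x,
      fun x => P.w 1 x * ind b x, P.k 2])
      (by
        intro i; fin_cases i
        exacts [finite_range_mul hf (finite_range_ind _),
          finite_range_mul (P.finite_range_w 1) (finite_range_ind _), P.finite_range_k 2])
      (by
        intro i x; fin_cases i
        exacts [abs_mul_le_one (abs_ind_le _ x) (abs_ind_le _ x),
          abs_mul_le_one (haw 1 x) (abs_ind_le _ x), hak 2 x]) 2 rfl).1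
  have r3 := (abs_le.1 <| h.abs_tri_le ht hM (f := ![P.k 0, fun x => P.w 1 x * ind (a ∩ b) x,
      fun x => P.w 2 x * ind c x])
      (by
        intro i; fin_cases i
        exacts [P.finite_range_k 0, finite_range_mul (P.finite_range_w 1) (finite_range_ind _),
          finite_range_mul (P.finite_range_w 2) (finite_range_ind _)])
      (by
        intro i x; fin_cases i
        exacts [hak 0 x, abs_mul_le_one (haw 1 x) (abs_ind_le _ x),
          abs_mul_le_one (haw 2 x) (abs_ind_le _ x)]) 0 rfl).1
  have hmain := half_le_count hM 𝒳.inv 𝒳.erg ha hb hc hH0 hH1 hH2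
  simp only [Matrix.cons_val] at r1 r2 r3
  have hE : ∀ (y : G) (x : 𝒳.X), ind 𝒳.A x * ind (a ∩ c) x *
        (P.k 1 (rightEmb y • x) * (ind 𝒳.A (diagEmb y • x) * ind b (diagEmb y • x))) +
      ind 𝒳.A x * ind (a ∩ c) x *
        (P.w 1 (rightEmb y • x) * ind b (rightEmb y • x) * P.k 2 (diagEmb y • x)) +
      P.k 0 x * (P.w 1 (rightEmb y • x) * ind (a ∩ b) (rightEmb y • x) *
        (P.w 2 (diagEmb y • x) * ind c (diagEmb y • x))) +
      θ ^ 3 * (ind (a ∩ c) x * ind b (rightEmb y • x) *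
        (1 - ind (H 0) x - ind (H 1) (rightEmb y • x) - ind (H 2) (diagEmb y • x))) ≤
      ind 𝒳.A x * (ind 𝒳.A (rightEmb y • x) * ind 𝒳.A (diagEmb y • x)) := fun y x => by
    have hS : rightEmb y • x ∈ a ↔ x ∈ a := ha.mem_iff y x
    have hR : diagEmb y • x ∈ c ↔ x ∈ c := hc.mem_iff y x
    have hR' : diagEmb y • x ∈ b ↔ rightEmb y • x ∈ b := by
      rw [← leftEmb_smul_rightEmb_smul, hb.mem_iff]
    have hnn : 0 ≤ ind 𝒳.A x * (ind 𝒳.A (rightEmb y • x) * ind 𝒳.A (diagEmb y • x)) :=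
      mul_nonneg (ind_nonneg _ _) (mul_nonneg (ind_nonneg _ _) (ind_nonneg _ _))
    by_cases hx : x ∈ a ∩ c ∧ rightEmb y • x ∈ b
    · obtain ⟨hx, hxb⟩ := hx
      have hS' : rightEmb y • x ∈ a ∩ b := ⟨hS.2 hx.1, hxb⟩
      have hR'' : diagEmb y • x ∈ b ∩ c := ⟨hR'.2 hxb, hR.2 hx.2⟩
      rw [ind_of_mem hx, ind_of_mem hxb, ind_of_mem hR''.1, ind_of_mem hS', ind_of_mem hR''.2]
      have key : θ ^ 3 * (1 - ind (H 0) x - ind (H 1) (rightEmb y • x) -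
          ind (H 2) (diagEmb y • x)) ≤
          P.w 0 x * (P.w 1 (rightEmb y • x) * P.w 2 (diagEmb y • x)) := by
        have g0 := ind_nonneg (H 0) x
        have g1 := ind_nonneg (H 1) (rightEmb y • x)
        have g2 := ind_nonneg (H 2) (diagEmb y • x)
        have g3 : 0 ≤ P.w 0 x * (P.w 1 (rightEmb y • x) * P.w 2 (diagEmb y • x)) :=
          mul_nonneg (hw _ _).1 (mul_nonneg (hw _ _).1 (hw _ _).1)
        by_cases h0 : x ∈ H 0
        · rw [ind_of_mem h0]
          exact (mul_nonpos_of_nonneg_of_nonpos (by positivity) (by linarith)).trans g3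
        by_cases h1 : rightEmb y • x ∈ H 1
        · rw [ind_of_mem h1]
          exact (mul_nonpos_of_nonneg_of_nonpos (by positivity) (by linarith)).trans g3
        by_cases h2 : diagEmb y • x ∈ H 2
        · rw [ind_of_mem h2]
          exact (mul_nonpos_of_nonneg_of_nonpos (by positivity) (by linarith)).trans g3
        rw [ind_of_notMem h0, ind_of_notMem h1, ind_of_notMem h2]
        calc θ ^ 3 * (1 - 0 - 0 - 0) = θ * (θ * θ) := by ring
          _ ≤ _ := mul_le_mul (hw0 x hx h0) (mul_le_mul (hw1 _ hS' h1) (hw2 _ hR'' h2) hθ.le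
            (hw _ _).1) (by positivity) (hw _ _).1
      simp only [Part.k]
      linarith
    · have hz : ind (a ∩ c) x * ind b (rightEmb y • x) = 0 := by
        rcases not_and_or.1 hx with h | h
        · rw [ind_of_notMem h, zero_mul]
        · rw [ind_of_notMem h, mul_zero]
      have hz1 : ind (a ∩ b) (rightEmb y • x) * ind c (diagEmb y • x) = 0 := by
        rw [← hz]
        simp only [ind_inter, ind_smul_of_fixed ha, ind_smul_of_fixed hc]; ring
      refine le_of_eq_of_le ?_ hnn
      rw [hba]
      linear_combination (ind 𝒳.A x * P.k 1 (rightEmb y • x) * ind 𝒳.A (diagEmb y • x) +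
        ind 𝒳.A x * P.w 1 (rightEmb y • x) * P.k 2 (diagEmb y • x) + θ ^ 3 *
        (1 - ind (H 0) x - ind (H 1) (rightEmb y • x) - ind (H 2) (diagEmb y • x))) * hz +
        P.k 0 x * P.w 1 (rightEmb y • x) * P.w 2 (diagEmb y • x) * hz1
  have bA := bdd_ind 𝒳.A
  have bS : ∀ {f : 𝒳.X → ℝ}, Bdd f → Bdd fun p : G × 𝒳.X => f (rightEmb p.1 • p.2) :=
    fun hf => hf.comp _
  have bR : ∀ {f : 𝒳.X → ℝ}, Bdd f → Bdd fun p : G × 𝒳.X => f (diagEmb p.1 • p.2) :=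
    fun hf => hf.comp _
  have hfin := (M.prod 𝒳.m).mono (f := fun p => ind 𝒳.A p.2 * ind (a ∩ c) p.2 *
        (P.k 1 (rightEmb p.1 • p.2) * (ind 𝒳.A (diagEmb p.1 • p.2) * ind b (diagEmb p.1 • p.2))) +
      ind 𝒳.A p.2 * ind (a ∩ c) p.2 *
        (P.w 1 (rightEmb p.1 • p.2) * ind b (rightEmb p.1 • p.2) * P.k 2 (diagEmb p.1 • p.2)) +
      P.k 0 p.2 * (P.w 1 (rightEmb p.1 • p.2) * ind (a ∩ b) (rightEmb p.1 • p.2) *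
        (P.w 2 (diagEmb p.1 • p.2) * ind c (diagEmb p.1 • p.2))) +
      θ ^ 3 * (ind (a ∩ c) p.2 * ind b (rightEmb p.1 • p.2) *
        (1 - ind (H 0) p.2 - ind (H 1) (rightEmb p.1 • p.2) - ind (H 2) (diagEmb p.1 • p.2))))
      (g := fun p => ind 𝒳.A p.2 * (ind 𝒳.A (rightEmb p.1 • p.2) * ind 𝒳.A (diagEmb p.1 • p.2)))
    ?_ ?_ fun p => hE p.1 p.2
  · rw [Mean.add, Mean.add, Mean.add, Mean.smul] at hfin
    have := mul_le_mul_of_nonneg_left hmain (pow_pos hθ 3).le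
    simp only [Mean.prod_apply] at hfin
    unfold tri at r1 r2 r3 ⊢
    linarith
  · exact (((((bA.comp _).mul ((bdd_ind _).comp _)).mul ((bS (P.bdd_k 1)).mul
      ((bR bA).mul (bR (bdd_ind _))))).add (((bA.comp _).mul ((bdd_ind _).comp _)).mul
      (((bS (P.bdd_w 1)).mul (bS (bdd_ind _))).mul (bR (P.bdd_k 2))))).add
      (((P.bdd_k 0).comp _).mul (((bS (P.bdd_w 1)).mul (bS (bdd_ind _))).mul
      ((bR (P.bdd_w 2)).mul (bR (bdd_ind _)))))).add (((((bdd_ind _).comp _).mul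
      (bS (bdd_ind _))).mul ((((Bdd.const 1).sub ((bdd_ind _).comp _)).sub
      (bS (bdd_ind _))).sub (bR (bdd_ind _)))).smul _)
  · exact (bA.comp _).mul ((bS bA).mul (bR bA))

end SchurMean

namespace SchurMean

namespace Mean

variable {X J : Type*} (m : Mean X)

theorem ind_le_sum {n : ℕ} {A Z : Set X} {s : Fin n → Set X} (h : A ⊆ Z ∪ ⋃ i, s i) :
    m (ind A) ≤ m (ind Z) + ∑ i, m (ind (s i)) := by
  rw [← m.sum, ← m.add]
  have hb : Bdd fun x => ∑ i, ind (s i) x := by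
    refine ⟨∑ _ : Fin n, 1, fun x => (Finset.abs_sum_le_sum_abs _ _).trans ?_⟩
    exact Finset.sum_le_sum fun i _ => abs_ind_le _ x
  refine m.mono (bdd_ind A) ((bdd_ind Z).add hb) fun x => ?_
  have h0 : 0 ≤ ∑ i, ind (s i) x := Finset.sum_nonneg fun i _ => ind_nonneg _ x
  by_cases hx : x ∈ A
  · rw [ind_of_mem hx]
    rcases h hx with hz | hz
    · rw [ind_of_mem hz]; linarith
    · obtain ⟨i, hi⟩ := Set.mem_iUnion.1 hz
      have := Finset.single_le_sum (f := fun i => ind (s i) x) (fun i _ => ind_nonneg _ x)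
        (Finset.mem_univ i)
      rw [ind_of_mem hi] at this
      linarith [ind_nonneg Z x]
  · rw [ind_of_notMem hx]; exact add_nonneg (ind_nonneg _ _) h0

theorem markov {f : X → ℝ} (hf : Bdd f) {s : ℝ} (hs : 0 ≤ s) :
    s ^ 2 * m (ind {x | s ≤ |f x|}) ≤ m fun x => f x ^ 2 := by
  rw [← m.smul]
  refine m.mono ((bdd_ind _).smul _) hf.sq fun x => ?_
  by_cases h : s ≤ |f x|
  · rw [ind_of_mem (by exact h), mul_one, ← sq_abs (f x)]; gcongr
  · rw [ind_of_notMem (by exact h), mul_zero]; positivity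

theorem le_of_fiber_le [Finite J] (p : X → J) {f g : X → ℝ}
    (h : ∀ j, (m fun x => ind (p ⁻¹' {j}) x * f x) ≤ m fun x => ind (p ⁻¹' {j}) x * g x) :
    m f ≤ m g := by
  have := Fintype.ofFinite J
  have key : ∀ f : X → ℝ, m f = ∑ j, m fun x => ind (p ⁻¹' {j}) x * f x := fun f => by
    rw [← m.sum]
    congr 1
    funext x
    rw [Fintype.sum_eq_single (p x), ind_of_mem (by simp), one_mul]
    intro j hj
    rw [ind_of_notMem (by simpa using hj.symm), zero_mul]
  rw [key f, key g]
  exact Finset.sum_le_sum fun j _ => h j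

theorem ind_null_fiber [Finite J] (p : X → J) :
    m (ind {x | m (ind (p ⁻¹' {p x})) = 0}) = 0 := by
  refine le_antisymm ?_ (m.isFA.nonneg _)
  rw [← m.const 0]
  refine m.le_of_fiber_le p fun j => ?_
  simp_rw [mul_zero, m.const]
  by_cases hj : m (ind (p ⁻¹' {j})) = 0
  · rw [← hj]
    exact m.mono ((bdd_ind _).mul (bdd_ind _)) (bdd_ind _) fun x =>
      mul_le_of_le_one_right (ind_nonneg _ _) (ind_le_one _ _)
  · refine m.le_of_le ((bdd_ind _).mul (bdd_ind _)) fun x => ?_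
    by_cases hx : p x = j
    · rw [ind_of_notMem (B := {x | _}) (by simpa [hx] using hj), mul_zero]
    · rw [ind_of_notMem (by exact hx), zero_mul]

theorem ind_dense_fiber_le [Finite J] (p : X → J) (H : Set X) {c : ℝ} (hc : 0 ≤ c) :
    m (ind {x | m (ind (p ⁻¹' {p x})) < c * m (ind (p ⁻¹' {p x} ∩ H))}) ≤ c * m (ind H) := by
  rw [← m.smul]
  refine m.le_of_fiber_le p fun j => ?_
  by_cases hj : m (ind (p ⁻¹' {j})) < c * m (ind (p ⁻¹' {j} ∩ H))
  · have h1 : (m fun x => ind (p ⁻¹' {j}) x * (c * ind H x)) = c * m (ind (p ⁻¹' {j} ∩ H)) := by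
      rw [← m.smul]
      congr 1
      funext x
      rw [ind_inter]; ring
    rw [h1]
    refine le_trans ?_ hj.le
    exact m.mono ((bdd_ind _).mul (bdd_ind _)) (bdd_ind _) fun x =>
      mul_le_of_le_one_right (ind_nonneg _ _) (ind_le_one _ _)
  · refine m.mono ((bdd_ind _).mul (bdd_ind _)) ((bdd_ind _).mul ((bdd_ind _).smul _)) fun x => ?_
    by_cases hx : p x = j
    · rw [ind_of_notMem (B := {x | _}) (by simpa [hx] using hj), mul_zero]
      exact mul_nonneg (ind_nonneg _ _) (mul_nonneg hc (ind_nonneg _ _))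
    · rw [ind_of_notMem (by exact hx), zero_mul, zero_mul]

end Mean

theorem IsFA.union_le {X : Type*} {ν : Set X → ℝ} (h : IsFA ν) (A B : Set X) :
    ν (A ∪ B) ≤ ν A + ν B := by
  rw [← Set.union_sdiff_self, h.add A (B \ A) Set.disjoint_sdiff_right]
  gcongr
  exact h.mono Set.sdiff_subset

theorem exists_pos_forall_le {J : Type*} [Finite J] (f : J → ℝ) :
    ∃ κ > 0, ∀ j, 0 < f j → κ ≤ f j := by
  have h : ∀ᶠ κ in nhdsWithin (0 : ℝ) (Set.Ioi 0), ∀ j, 0 < f j → κ ≤ f j := by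
    refine Filter.eventually_all.2 fun j => ?_
    by_cases hj : 0 < f j
    · filter_upwards [Ioo_mem_nhdsGT hj] with κ hκ _
      exact hκ.2.le
    · exact Filter.Eventually.of_forall fun _ h => absurd h hj
  obtain ⟨κ, h1, h2⟩ := (h.and self_mem_nhdsWithin).exists
  exact ⟨κ, h2, h1⟩

universe u

variable {G : Type u} [Group G] {𝒳 𝒴 : Sys G}

theorem Part.IsOpt.mono {P : Part 𝒳} {ε ε' : ℝ} (h : P.IsOpt ε) (hε : ε ≤ ε') : P.IsOpt ε' :=
  fun 𝒵 e Q => (h 𝒵 e Q).trans (by gcongr)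

theorem Part.IsOpt.ind_low_le {P : Part 𝒳} {t l : ℝ} (ht : 0 < t) (h : P.IsOpt (t ^ 2))
    (hl : 0 ≤ l) (e : Ext 𝒴 𝒳) (i : Fin 3) :
    𝒴.m (ind (𝒴.A ∩ {y | P.w i (e.π y) < l})) ≤ t + l := by
  classical
  have hR : ∀ y, ((P.pull e).post fun j v => if j = i ∧ v < l then 1 else 0).w i y =
      ind {y | P.w i (e.π y) < l} y := fun y => by
    rw [Part.post_w]
    by_cases hy : P.w i (e.π y) < l
    · rw [ind_of_mem (by exact hy)]
      exact if_pos ⟨rfl, hy⟩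
    · rw [ind_of_notMem (by exact hy)]
      exact if_neg fun h => hy h.2
  have h1 := h.inner_le ht e ((P.pull e).post fun j v => if j = i ∧ v < l then 1 else 0) i
    (fun y => by rw [hR]; exact abs_ind_le _ _)
    (fun j hj y => by rw [Part.post_w, if_neg fun h => hj h.1])
  simp_rw [hR] at h1
  have h2 := 𝒴.m.mono (f := ind (𝒴.A ∩ {y | P.w i (e.π y) < l}))
    (g := fun y => P.k i (e.π y) * ind {y | P.w i (e.π y) < l} y + l)
    (bdd_ind _) ((((P.bdd_k i).comp _).mul (bdd_ind _)).add (Bdd.const _)) fun y => by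
      rw [ind_inter, Part.k, e.ind_comp]
      by_cases hy : P.w i (e.π y) < l
      · rw [ind_of_mem (B := {y | _}) (by exact hy)]; linarith
      · rw [ind_of_notMem (B := {y | _}) (by exact hy)]; linarith
  rw [𝒴.m.add, 𝒴.m.const] at h2
  linarith

theorem Sys.tri_pos (𝒳 : Sys G) (hA : 0 < 𝒳.m (ind 𝒳.A)) {M : Mean G} (hM : BiInv M) :
    0 < tri M 𝒳.m (ind 𝒳.A) (ind 𝒳.A) (ind 𝒳.A) := by
  obtain ⟨δ, hδ⟩ : ∃ δ, δ = 𝒳.m (ind 𝒳.A) := ⟨_, rfl⟩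
  rw [← hδ] at hA
  have hδ1 : δ ≤ 1 := hδ.trans_le (𝒳.m.le_of_le (bdd_ind _) (ind_le_one _))
  obtain ⟨l, hl⟩ : ∃ l, l = δ / 12 := ⟨_, rfl⟩
  have hl0 : 0 < l := by rw [hl]; positivity
  obtain ⟨t, ht⟩ : ∃ t, t = l * δ / 40 := ⟨_, rfl⟩
  have ht0 : 0 < t := by rw [ht]; positivity
  obtain ⟨𝒴, e, P, hP, -⟩ := Part.exists_isOpt 𝒳 (pow_pos ht0 2)
  obtain ⟨κ, hκ, hκP⟩ := exists_pos_forall_le fun j : Fin 3 → P.ι =>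
    𝒴.m (ind ((fun x i => P.α i x) ⁻¹' {j}))
  obtain ⟨τ, hτ⟩ : ∃ τ, τ = (l / 2) ^ 3 * κ ^ 2 / 12 := ⟨_, rfl⟩
  have hτ0 : 0 < τ := by rw [hτ]; positivity
  obtain ⟨𝒵, e', P', hP', hw⟩ :=
    Part.exists_isOpt 𝒴 (lt_min (pow_pos hτ0 4) (pow_pos ht0 2))
  rw [← e.tri_eq, ← e'.tri_eq]
  let Q := P.pull e'
  let H : Fin 3 → Set 𝒵.X := fun i => {z | l / 2 ≤ |P'.w i z - Q.w i z|}
  have hH : ∀ i, 𝒵.m (ind (H i)) ≤ 24 * t ^ 2 / l ^ 2 := fun i => by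
    have h1 := 𝒵.m.markov ((P'.bdd_w i).sub (Q.bdd_w i)) (half_pos hl0).le
    have h2 := hP.sq_dist_le e' (hP'.mono (min_le_right _ _)) i
    rw [le_div_iff₀ (by positivity)]
    have h3 := h1.trans h2
    change (l / 2) ^ 2 * 𝒵.m (ind (H i)) ≤ _ at h3
    linarith
  let p : Fin 3 → 𝒵.X → Q.ι × Q.ι := fun i z => (Q.α (src i) z, Q.α (tgt i) z)
  let E : Fin 3 → Set 𝒵.X := fun i =>
    {z | 𝒵.m (ind (p i ⁻¹' {p i z})) < 6 * 𝒵.m (ind (p i ⁻¹' {p i z} ∩ H i))}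
  let B : Fin 3 → Set 𝒵.X := fun i => 𝒵.A ∩ {z | P.w i (e'.π z) < l}
  let q : 𝒵.X → Fin 3 → Q.ι := fun z i => Q.α i z
  let Z : Set 𝒵.X := {z | 𝒵.m (ind (q ⁻¹' {q z})) = 0}
  obtain ⟨x, hxA, hxZ, hxE, hxB⟩ : ∃ x, x ∈ 𝒵.A ∧ x ∉ Z ∧ (∀ i, x ∉ E i) ∧ ∀ i, x ∉ B i := by
    by_contra! hcon
    have h1 := 𝒵.m.ind_le_sum (A := 𝒵.A) (Z := Z) (s := fun i => E i ∪ B i) fun z hz => by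
      by_contra hz'
      simp only [Set.mem_union, Set.mem_iUnion, not_or, not_exists] at hz'
      obtain ⟨i, hi⟩ := hcon z hz hz'.1 fun i => (hz'.2 i).1
      exact (hz'.2 i).2 hi
    have h2 : 𝒵.m (ind Z) = 0 := 𝒵.m.ind_null_fiber q
    have h3 : ∀ i, 𝒵.m (ind (E i ∪ B i)) ≤ 6 * (24 * t ^ 2 / l ^ 2) + (t + l) := fun i => by
      refine (𝒵.m.isFA.union_le _ _).trans (add_le_add ?_ ?_)
      · exact (𝒵.m.ind_dense_fiber_le (p i) (H i) (by norm_num)).trans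
          (mul_le_mul_of_nonneg_left (hH i) (by norm_num))
      · exact hP.ind_low_le ht0 hl0.le e' i
    have h4 : 𝒵.m (ind 𝒵.A) = δ := by
      rw [hδ, ← (e'.trans e).mean_comp _ (bdd_ind _)]
      simp_rw [Ext.ind_comp]
    have h5 : 24 * t ^ 2 / l ^ 2 = 24 * δ ^ 2 / 1600 := by
      rw [ht]; field_simp; norm_num
    have h6 := Finset.sum_le_sum fun i (_ : i ∈ Finset.univ) => h3 i
    rw [Finset.sum_const, Finset.card_univ, Fintype.card_fin, nsmul_eq_mul, h5, ht, hl] at h6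
    push_cast at h6
    nlinarith
  have hfix : ∀ j, Fixed (emb (G := G) j) (· ∈ {z | Q.α j z = Q.α j x}) := fun j y z => by
    change (Q.α j (emb j y • z) = Q.α j x) = _
    rw [Q.fixed j]; rfl
  have hpair : ∀ i, p i ⁻¹' {p i x} = {z | Q.α (src i) z = Q.α (src i) x} ∩
      {z | Q.α (tgt i) z = Q.α (tgt i) x} := fun i => by
    ext z; exact Prod.ext_iff
  have hpH : ∀ i, 6 * 𝒵.m (ind (p i ⁻¹' {p i x} ∩ H i)) ≤ 𝒵.m (ind (p i ⁻¹' {p i x})) :=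
    fun i => not_lt.1 (hxE i)
  have hpw : ∀ i, ∀ z ∈ p i ⁻¹' {p i x}, z ∉ H i → l / 2 ≤ P'.w i z := fun i z hz hzH => by
    have h1 : Q.w i z = Q.w i x := by
      rw [hpair] at hz
      unfold Part.w
      rw [hz.1, hz.2]
    have h2 : l ≤ Q.w i x := by
      by_contra h2
      exact hxB i ⟨hxA, not_le.1 h2⟩
    have h3 : |P'.w i z - Q.w i z| < l / 2 := not_le.1 hzH
    linarith [(abs_lt.1 h3).1]
  simp_rw [hpair] at hpH hpw
  refine (hP'.mono (min_le_left _ _)).tri_pos hτ0 hw hM (hfix 0) (hfix 1) (hfix 2) (hpH 0) (hpH 1)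
    (hpH 2) (half_pos hl0) (hpw 0) (hpw 1) (hpw 2) ?_
  have hq : {z | Q.α 0 z = Q.α 0 x} ∩ {z | Q.α 1 z = Q.α 1 x} ∩ {z | Q.α 2 z = Q.α 2 x} =
      q ⁻¹' {q x} := by
    ext z
    refine ⟨fun h => funext fun i => ?_, fun h => ⟨⟨congrFun h 0, congrFun h 1⟩, congrFun h 2⟩⟩
    fin_cases i
    exacts [h.1.1, h.1.2, h.2]
  have hκx : κ ≤ 𝒵.m (ind (q ⁻¹' {q x})) := by
    have h1 : 𝒵.m (ind (q ⁻¹' {q x})) = 𝒴.m (ind ((fun y i => P.α i y) ⁻¹' {q x})) := by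
      rw [← e'.mean_comp _ (bdd_ind _), SchurMean.ind_comp]; rfl
    have h2 := lt_of_le_of_ne (𝒵.m.isFA.nonneg _) (Ne.symm hxZ)
    exact (hκP (q x) (h2.trans_eq h1)).trans_eq h1.symm
  rw [hq]
  have h1 : κ ^ 2 ≤ 𝒵.m (ind (q ⁻¹' {q x})) ^ 2 := by gcongr
  have h2 : 0 < (l / 2) ^ 3 * κ ^ 2 := by positivity
  have h3 := mul_le_mul_of_nonneg_left h1 (pow_pos (half_pos hl0) 3).le
  rw [hτ]
  linarith

end SchurMean

namespace SchurMean

universe u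

variable {G : Type u} [Group G] {M : Mean G}

theorem exists_recurrence {X : Type u} [MulAction (G × G) X] {m : Mean X} (hm : m.Inv (G × G))
    {A : Set X} (hA : 0 < m (ind A)) (hM : BiInv M) {N : Set G} (hN : M (ind N) = 0) :
    ∃ y ∉ N, 0 < m (ind (A ∩ ((rightEmb y • ·) ⁻¹' A ∩ (diagEmb y • ·) ⁻¹' A))) := by
  obtain ⟨n, h1, h2, h3, h4⟩ := exists_ergodic_absolutelyContinuous hm A
  by_contra! h
  have h5 := (Sys.mk X n h1 h2 A).tri_pos (hA.trans_le h3) hM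
  have h6 : ∀ (y : G) (x : X), ind A x * (ind A (rightEmb y • x) * ind A (diagEmb y • x)) =
      ind (A ∩ ((rightEmb y • ·) ⁻¹' A ∩ (diagEmb y • ·) ⁻¹' A)) x := fun y x => by
    rw [ind_inter, ind_inter, ← ind_comp, ← ind_comp]
  unfold tri at h5
  dsimp only at h5
  simp_rw [h6] at h5
  refine h5.not_ge (le_of_le_of_eq (M.mono (n.bdd_apply fun y x => abs_ind_le _ x) (bdd_ind N)
    fun y => ?_) hN)
  by_cases hy : y ∈ N
  · rw [ind_of_mem hy]; exact n.le_of_le (bdd_ind _) (ind_le_one _)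
  · rw [h4 _ (le_antisymm (h y hy) (m.isFA.nonneg _))]; exact ind_nonneg _ _

theorem Mean.Inv.exists_pi {Γ Y : Type*} [Group Γ] [MulAction Γ Y] {κ : Mean Y} (hκ : κ.Inv Γ)
    (n : ℕ) : ∃ m : Mean (Fin n → Y), m.Inv Γ ∧
      (∀ i f, Bdd f → m (fun x => f (x i)) = κ f) ∧
      ∀ B : Fin n → Set Y, m (ind {x | ∀ i, x i ∈ B i}) = ∏ i, κ (ind (B i)) := by
  induction n with
  | zero =>
    refine ⟨κ.map fun _ => Fin.elim0, fun g f hf => ?_, fun i => i.elim0, fun B => ?_⟩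
    · congr 1
      funext x
      congr 1
      exact Subsingleton.elim _ _
    · rw [Finset.univ_eq_empty, Finset.prod_empty, ← Mean.univ (κ.map fun _ => Fin.elim0)]
      congr 2
      ext x
      simp
  | succ n ih =>
    obtain ⟨m, h1, h2, h3⟩ := ih
    refine ⟨(κ.prod m).map fun p => Fin.cons p.1 p.2, fun g f hf => ?_, fun i f hf => ?_,
      fun B => ?_⟩
    · rw [Mean.map_apply, Mean.map_apply,
        ← hκ.prod h1 g (fun p => f (Fin.cons p.1 p.2)) (hf.comp _)]
      congr 1
      funext p
      congr 1
      funext i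
      refine Fin.cases ?_ (fun i => ?_) i <;> simp
    · rw [Mean.map_apply, Mean.prod_apply]
      refine Fin.cases ?_ (fun i => ?_) i
      · simp [Mean.const]
      · simp [h2 i f hf, Mean.const]
    · rw [Mean.map_apply, Mean.prod_apply, Fin.prod_univ_succ, ← h3, ← Mean.smul_right]
      congr 1
      funext y
      rw [← m.smul]
      congr 1
      funext x
      have : (Fin.cons y x ∈ {x : Fin (n + 1) → Y | ∀ i, x i ∈ B i}) ↔
          y ∈ B 0 ∧ x ∈ {x : Fin n → Y | ∀ i, x i ∈ B i.succ} := by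
        simp [Fin.forall_fin_succ]
      by_cases hy : y ∈ B 0 <;> by_cases hx : x ∈ {x : Fin n → Y | ∀ i, x i ∈ B i.succ} <;>
        simp only [ind, Set.indicator, this, hy, hx] <;> simp

/-- A copy of `G` carrying the two-sided action of `G × G`. -/
structure BiAct (G : Type u) where
  /-- The underlying group element. -/
  val : G

instance : MulAction (G × G) (BiAct G) where
  smul p x := ⟨p.1 * x.val * p.2⁻¹⟩
  one_smul x := congrArg BiAct.mk (by simp)
  mul_smul p q x := congrArg BiAct.mk (by
    change p.1 * q.1 * x.val * (p.2 * q.2)⁻¹ = p.1 * (q.1 * x.val * q.2⁻¹) * p.2⁻¹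
    simp [mul_assoc])

theorem BiAct.val_smul (p : G × G) (x : BiAct G) : (p • x).val = p.1 * x.val * p.2⁻¹ := rfl

theorem BiInv.inv_map_biAct (hM : BiInv M) : (M.map BiAct.mk).Inv (G × G) := fun g f hf => by
  rw [Mean.map_apply, Mean.map_apply, ← hM.left g.1 (fun y => f ⟨y⟩) (hf.comp _),
    ← hM.right g.2⁻¹ (fun y => f ⟨g.1 * y⟩) (hf.comp _)]
  congr 1
  funext y
  rw [← mul_assoc]; rfl

theorem BiInv.schur {r : ℕ} (hM : BiInv M) (c : G → Fin r) :
    M (ind {y | 0 < M (ind {x | c x = c y ∧ c (x * y) = c y ∧ c (y * x) = c y})}) ≠ 0 := by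
  classical
  intro h0
  let Z : Set G := {y | M (ind (c ⁻¹' {c y})) = 0}
  let C : Fin r → Set G := fun i => if M (ind (c ⁻¹' {i})) = 0 then Set.univ else c ⁻¹' {i}
  have hmap : ∀ T : Set G, M.map BiAct.mk (ind (BiAct.val ⁻¹' T)) = M (ind T) := fun T => by
    rw [Mean.map_apply, ind_comp]; rfl
  obtain ⟨m, h1, h2, h3⟩ := hM.inv_map_biAct.exists_pi r
  have hC : ∀ i, 0 < M (ind (C i)) := fun i => by
    simp only [C]
    split_ifs with h
    · rw [M.univ]; exact one_pos
    · exact lt_of_le_of_ne (M.isFA.nonneg _) (Ne.symm h)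
  have hA : 0 < m (ind {x | ∀ i, x i ∈ BiAct.val ⁻¹' C i}) := by
    rw [h3]; exact Finset.prod_pos fun i _ => (hC i).trans_eq (hmap _).symm
  obtain ⟨y, hyN, hy⟩ := exists_recurrence h1 hA hM
    (N := {y | 0 < M (ind {x | c x = c y ∧ c (x * y) = c y ∧ c (y * x) = c y})} ∪ Z)
    (le_antisymm ((M.isFA.union_le _ _).trans_eq
      (by rw [h0, M.ind_null_fiber c, add_zero])) (M.isFA.nonneg _))
  rw [Set.mem_union, not_or] at hyN
  have hCy : C (c y) = c ⁻¹' {c y} := if_neg hyN.2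
  let T : Set G := {z | c z = c y ∧ c (z * y⁻¹) = c y ∧ c (y * z * y⁻¹) = c y}
  have hT : m (ind ((fun x => x (c y)) ⁻¹' (BiAct.val ⁻¹' T))) = M (ind T) := by
    rw [← hmap, ← h2 (c y) _ (bdd_ind _), ind_comp]
  refine hyN.1 (hy.trans_le ?_)
  calc _ ≤ m (ind ((fun x => x (c y)) ⁻¹' (BiAct.val ⁻¹' T))) := m.isFA.mono fun x hx => by
        have g1 : (x (c y)).val ∈ C (c y) := hx.1 _
        have g2 : (rightEmb y • x (c y)).val ∈ C (c y) := hx.2.1 _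
        have g3 : (diagEmb y • x (c y)).val ∈ C (c y) := hx.2.2 _
        rw [hCy] at g1 g2 g3
        rw [BiAct.val_smul] at g2 g3
        exact ⟨g1, by simpa [rightEmb] using g2, g3⟩
    _ = M (fun x => ind T (x * y)) := hT.trans (hM.right y (ind T) (bdd_ind _)).symm
    _ ≤ _ := by
      rw [ind_comp]
      refine M.isFA.mono fun x hx => ?_
      obtain ⟨g1, g2, g3⟩ := hx
      refine ⟨?_, g1, ?_⟩
      · simpa using g2
      · simpa [mul_assoc] using g3

theorem _root_.IsInvFAPM.exists_biInv {μ : Set G → ℝ} (hμ : IsInvFAPM μ) :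
    ∃ M : Mean G, BiInv M ∧ ∀ B, M (ind B) = μ B := by
  obtain ⟨M, hM⟩ := exists_mean ⟨hμ.nonneg, hμ.additive⟩ hμ.total
  refine ⟨M, ⟨fun g f hf => ?_, fun g f hf => ?_⟩, hM⟩
  · refine Mean.ext_ind (m := M.map (g * ·)) (fun B => ?_) hf
    rw [Mean.map_apply, ind_comp, hM, hM, ← hμ.left_invariant g⁻¹ B]
    congr 1
    exact (congrFun (Set.image_eq_preimage_of_inverse (f := (g⁻¹ * ·)) (g := (g * ·))
      (fun x => by simp) fun x => by simp) B).symm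
  · refine Mean.ext_ind (m := M.map (· * g)) (fun B => ?_) hf
    rw [Mean.map_apply, ind_comp, hM, hM, ← hμ.right_invariant g⁻¹ B]
    congr 1
    exact (congrFun (Set.image_eq_preimage_of_inverse (f := (· * g⁻¹)) (g := (· * g))
      (fun x => by simp) fun x => by simp) B).symm

end SchurMean

theorem schur_xy_yx_many_x {G : Type*} [Group G] (μ : Set G → ℝ) (hμ : IsInvFAPM μ)
    (r : ℕ) (hr : 1 ≤ r) (c : G → Fin r) :
    0 < μ {y | 0 < μ {x | c x = c y ∧ c (x * y) = c y ∧ c (y * x) = c y}} := by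
  obtain ⟨M, hM, hMμ⟩ := hμ.exists_biInv
  refine lt_of_le_of_ne (hμ.nonneg _) (Ne.symm ?_)
  simpa only [hMμ] using hM.schur c
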